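/- arXiv:1807.08933 — 3 statements merged into one kernel-verified Lean document; each statement's English description precedes it below -/
import Mathlib

section
/- If G is a 4-connected plane triangulation and v is a vertex of G with a chosen neighbour n(v), then the set N(v) \ {n(v)} induces a path in G. -/
/-- A combinatorial plane triangulation: a simple graph together with its set of
triangular faces, each edge on exactly two faces, satisfying Euler's formula. -/
structure PlaneTriangulation (V : Type*) [Fintype V] [DecidableEq V] where
  G : SimpleGraph V
  faces : Finset (Finset V)
  face_card : ∀ f ∈ faces, f.card = 3
  face_clique : ∀ f ∈ faces, ∀ a ∈ f, ∀ b ∈ f, a ≠ b → G.Adj a b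
  edge_two_faces : ∀ a b : V, G.Adj a b → (faces.filter (fun f => a ∈ f ∧ b ∈ f)).card = 2
  euler : (Fintype.card V : ℤ) - (G.edgeSet.ncard : ℤ) + (faces.card : ℤ) = 2

/-- The degree of a vertex. -/
noncomputable def PlaneTriangulation.deg {V : Type*} [Fintype V] [DecidableEq V]
    (T : PlaneTriangulation V) (v : V) : ℕ := (T.G.neighborSet v).ncard

/-- Membership in the family `E(4)`, witnessed by a proper `3`-colouring
`{B, W, R}` in which every red vertex has degree `4`. -/
def PlaneTriangulation.IsE4Coloring {V : Type*} [Fintype V] [DecidableEq V]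
    (T : PlaneTriangulation V) (B W R : Set V) : Prop :=
  B ∪ W ∪ R = Set.univ ∧ Disjoint B W ∧ Disjoint B R ∧ Disjoint W R ∧
  (∀ a ∈ B, ∀ b ∈ B, ¬ T.G.Adj a b) ∧
  (∀ a ∈ W, ∀ b ∈ W, ¬ T.G.Adj a b) ∧
  (∀ a ∈ R, ∀ b ∈ R, ¬ T.G.Adj a b) ∧
  (∀ v ∈ R, T.deg v = 4)

def FourConnected {V : Type*} [Fintype V] (G : SimpleGraph V) : Prop :=
  5 ≤ Fintype.card V ∧ ∀ S : Set V, S.ncard ≤ 3 → (G.induce Sᶜ).Connected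

/-- A graph is a path graph: a nonempty tree in which every vertex has degree at most 2. -/
def IsPathGraph {α : Type*} (H : SimpleGraph α) : Prop :=
  H.IsTree ∧ ∀ u : α, (H.neighborSet u).ncard ≤ 2

open Matrix Module

/-- If the kernel of `A` only contains vectors that are constant on the fibres of `π`, then its
dimension is at most the number of values of `π`. -/
theorem Matrix.card_le_rank_add_card_of_ker {m n C K : Type*} [Field K] [Fintype m] [Fintype n]
    [Fintype C] (A : Matrix m n K) (π : n → C)
    (h : ∀ x, A *ᵥ x = 0 → ∀ i j, π i = π j → x i = x j) :
    Fintype.card n ≤ A.rank + Fintype.card C := by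
  have hker : LinearMap.ker A.mulVecLin ≤ LinearMap.range (LinearMap.funLeft K K π) := by
    intro x hx
    have hf : Function.FactorsThrough x π := fun i j hij => h x (by simpa using hx) i j hij
    exact ⟨Function.extend π x 0, funext fun i => hf.extend_apply 0 i⟩
  have h1 := LinearMap.finrank_range_add_finrank_ker A.mulVecLin
  have h2 := Submodule.finrank_mono hker
  have h3 := LinearMap.finrank_range_le (LinearMap.funLeft K K π)
  simp only [finrank_fintype_fun_eq_card] at h1 h3
  change A.rank + _ = _ at h1
  omega

/-- In a surjection `p : α → β`, the elements that share their image with another element number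
at most twice the defect `card α - card β`. -/
theorem card_filter_nontrivial_fiber_le {α β : Type*} [Fintype α] [Fintype β] (p : α → β)
    (hp : Function.Surjective p) [DecidablePred fun x => ∃ y, y ≠ x ∧ p y = p x] :
    (Finset.univ.filter fun x => ∃ y, y ≠ x ∧ p y = p x).card + 2 * Fintype.card β
      ≤ 2 * Fintype.card α := by
  classical
  rw [Finset.card_eq_sum_card_fiberwise (f := p) (t := Finset.univ) (fun _ _ => by simp),
    ← Finset.card_univ (α := α),
    Finset.card_eq_sum_card_fiberwise (s := (Finset.univ : Finset α)) (f := p) (t := Finset.univ)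
      (fun _ _ => by simp), ← Finset.card_univ (α := β), Finset.card_eq_sum_ones,
    Finset.mul_sum, Finset.mul_sum, ← Finset.sum_add_distrib]
  refine Finset.sum_le_sum fun b _ => ?_
  obtain ⟨a, rfl⟩ := hp b
  have ha : a ∈ Finset.univ.filter (fun x => p x = p a) := by simp
  by_cases h2 : 2 ≤ (Finset.univ.filter fun x => p x = p a).card
  · have := Finset.card_le_card (Finset.filter_subset_filter (fun x => p x = p a)
      (Finset.filter_subset (fun x => ∃ y, y ≠ x ∧ p y = p x) Finset.univ))
    omega
  · have h1 : (Finset.univ.filter fun x => p x = p a).card ≤ 1 := by omega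
    have h0 : (Finset.filter (fun x => p x = p a)
        (Finset.univ.filter fun x => ∃ y, y ≠ x ∧ p y = p x)) = ∅ := by
      refine Finset.filter_eq_empty_iff.2 fun x hx hxa => ?_
      obtain ⟨y, hyx, hy⟩ := (Finset.mem_filter.1 hx).2
      exact hyx (Finset.card_le_one.1 h1 y (by simp [hy, hxa]) x (by simp [hxa]))
    have := Finset.card_pos.2 ⟨a, ha⟩
    rw [h0, Finset.card_empty]
    omega

/-- Deleting a vertex from a finite connected `2`-regular graph (a cycle) leaves a path. -/
theorem isPathGraph_induce_diff_singleton {V : Type*} [Fintype V] (G : SimpleGraph V)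
    (S : Set V) (hconn : (G.induce S).Preconnected)
    (hdeg : ∀ a ∈ S, (G.neighborSet a ∩ S).ncard = 2) {n : V} (hn : n ∈ S) :
    IsPathGraph (G.induce (S \ {n})) := by
  classical
  obtain ⟨x, y, hxy, hN⟩ := Set.ncard_eq_two.1 (hdeg n hn)
  have hxN : x ∈ G.neighborSet n ∩ S := hN ▸ (by simp)
  have hyN : y ∈ G.neighborSet n ∩ S := hN ▸ (by simp)
  have hx : x ∈ S \ {n} := ⟨hxN.2, (G.ne_of_adj hxN.1).symm⟩
  have hy : y ∈ S \ {n} := ⟨hyN.2, (G.ne_of_adj hyN.1).symm⟩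
  have hadj : ∀ u ∈ S, G.Adj n u → u = x ∨ u = y := fun u hu h => by
    have : u ∈ ({x, y} : Set V) := hN ▸ ⟨h, hu⟩
    simpa using this
  set K := G.induce (S \ {n}) with hK
  have hnb : ∀ u : ↥(S \ {n}), K.degree u
      = ((G.neighborSet u ∩ S) \ {n}).ncard := by
    intro u
    rw [← SimpleGraph.card_neighborSet_eq_degree, ← Nat.card_eq_fintype_card,
      Nat.card_coe_set_eq, ← Set.ncard_image_of_injective _ Subtype.val_injective]
    congr 1
    ext w
    simp only [Set.mem_image, SimpleGraph.mem_neighborSet, hK, SimpleGraph.comap_adj,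
      Function.Embedding.subtype_apply, Subtype.exists, Set.mem_sdiff, Set.mem_inter_iff,
      Set.mem_singleton_iff]
    constructor
    · rintro ⟨w', h1, h2, rfl⟩
      exact ⟨⟨h2, h1.1⟩, h1.2⟩
    · rintro ⟨⟨h1, h2⟩, h3⟩
      exact ⟨w, ⟨h2, h3⟩, h1, rfl⟩
  have hdegK : ∀ u : ↥(S \ {n}), K.degree u + (if G.Adj n u then 1 else 0) = 2 := by
    intro u
    rw [hnb]
    split_ifs with h
    · rw [← hdeg u u.2.1]
      exact Set.ncard_sdiff_singleton_add_one ⟨h.symm, hn⟩ (Set.toFinite _)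
    · rw [Set.sdiff_singleton_eq_self fun h' => h h'.1.symm, hdeg u u.2.1]
  have hreach : K.Reachable ⟨x, hx⟩ ⟨y, hy⟩ := by
    let c : Set ↥(S \ {n}) := {u | K.Reachable ⟨x, hx⟩ u}
    have hJ : ∀ u : c, (K.induce c).degree u = K.degree u := by
      intro u
      rw [← SimpleGraph.card_neighborSet_eq_degree, ← SimpleGraph.card_neighborSet_eq_degree,
        ← Nat.card_eq_fintype_card, ← Nat.card_eq_fintype_card,
        Nat.card_coe_set_eq, Nat.card_coe_set_eq,
        ← Set.ncard_image_of_injective _ Subtype.val_injective]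
      congr 1
      ext w
      constructor
      · rintro ⟨w', h, rfl⟩
        exact h
      · intro h
        exact ⟨⟨w, SimpleGraph.Reachable.trans u.2 (SimpleGraph.Adj.reachable h)⟩, h, rfl⟩
    have hdx := hdegK ⟨x, hx⟩
    rw [if_pos (show G.Adj n x from hxN.1)] at hdx
    obtain ⟨w, hw, hodd⟩ := (K.induce c).exists_ne_odd_degree_of_exists_odd_degree
      ⟨⟨x, hx⟩, SimpleGraph.Reachable.refl _⟩ (by rw [hJ]; exact ⟨0, by simp only; omega⟩)
    rw [hJ] at hodd
    have hdw := hdegK w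
    have hnw : G.Adj n (w : ↥(S \ {n})) := by
      by_contra h
      rw [if_neg h] at hdw
      rw [show K.degree w = 2 by omega] at hodd
      exact absurd hodd (by decide)
    rcases hadj _ w.1.2.1 hnw with h | h
    · exact absurd (Subtype.ext (Subtype.ext h)) hw
    · have : w.1 = ⟨y, hy⟩ := Subtype.ext h
      exact this ▸ w.2
  have hall : ∀ u : ↥(S \ {n}), K.Reachable ⟨x, hx⟩ u := by
    have key : ∀ u : S, ∀ hu : u.1 ≠ n, K.Reachable ⟨x, hx⟩ ⟨u, u.2, hu⟩ := by
      intro u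
      have := (SimpleGraph.reachable_iff_reflTransGen _ _).1 (hconn ⟨n, hn⟩ u)
      induction this with
      | refl => exact fun h => absurd rfl h
      | @tail b c _ hbc ih =>
        intro hc
        have hbc' : G.Adj b c := hbc
        by_cases hb : b.1 = n
        · rcases hadj c c.2 (hb ▸ hbc') with h | h
          · rw [show (⟨c, c.2, hc⟩ : ↥(S \ {n})) = ⟨x, hx⟩ from Subtype.ext h]
          · rw [show (⟨c, c.2, hc⟩ : ↥(S \ {n})) = ⟨y, hy⟩ from Subtype.ext h]
            exact hreach
        · exact (ih hb).trans (SimpleGraph.Adj.reachable (by exact hbc'))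
    exact fun u => key ⟨u, u.2.1⟩ u.2.2
  have : Nonempty ↥(S \ {n}) := ⟨⟨x, hx⟩⟩
  refine ⟨SimpleGraph.isTree_iff_connected_and_card.2
    ⟨⟨fun u w => (hall u).symm.trans (hall w)⟩, ?_⟩, fun u => ?_⟩
  · have hsum := Finset.sum_congr rfl fun u (_ : u ∈ Finset.univ) => hdegK u
    rw [Finset.sum_add_distrib, SimpleGraph.sum_degrees_eq_twice_card_edges, Finset.sum_const,
      ← Finset.card_filter, show Finset.univ.filter (fun u : ↥(S \ {n}) => G.Adj n u)
        = {⟨x, hx⟩, ⟨y, hy⟩} from ?_, Finset.card_pair (by simpa using hxy), Finset.card_univ,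
      smul_eq_mul] at hsum
    · rw [Nat.card_eq_fintype_card, Nat.card_eq_fintype_card, ← SimpleGraph.edgeFinset_card]
      omega
    · ext u
      simp only [Finset.mem_filter, Finset.mem_univ, true_and, Finset.mem_insert,
        Finset.mem_singleton]
      constructor
      · intro h
        exact (hadj u u.2.1 h).imp (fun h => Subtype.ext h) (fun h => Subtype.ext h)
      · rintro (rfl | rfl)
        · exact hxN.1
        · exact hyN.1
  · have := hdegK u
    rw [← Nat.card_coe_set_eq, Nat.card_eq_fintype_card, SimpleGraph.card_neighborSet_eq_degree]
    omega

/-- In a `4`-connected graph, a property that spreads along edges avoiding at most three given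
vertices spreads to all remaining vertices. -/
theorem FourConnected.spread {V : Type*} [Fintype V] {G : SimpleGraph V}
    (h4 : FourConnected G) {t : Finset V} (ht : t.card ≤ 3) {P : V → Prop}
    (hP : ∀ a b, a ∉ t → b ∉ t → G.Adj a b → P a → P b) {a b : V} (ha : a ∉ t) (hb : b ∉ t)
    (h : P a) : P b := by
  have hr := (SimpleGraph.reachable_iff_reflTransGen _ _).1
    ((h4.2 t (by rwa [Set.ncard_coe_finset])).preconnected ⟨a, by simpa using ha⟩
      ⟨b, by simpa using hb⟩)
  have key : ∀ c : ↥((t : Set V)ᶜ),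
      Relation.ReflTransGen (G.induce (t : Set V)ᶜ).Adj ⟨a, by simpa using ha⟩ c → P c := by
    intro c hc
    induction hc with
    | refl => exact h
    | @tail x y _ hxy ih => exact hP x y x.2 y.2 hxy ih
  exact key _ hr

namespace PlaneTriangulation

variable {V : Type*} [Fintype V] [DecidableEq V] (T : PlaneTriangulation V)

/-- Two faces are related when they have a common edge. -/
def FaceRel (f g : T.faces) : Prop :=
  ∃ a b, a ≠ b ∧ a ∈ f.1 ∧ b ∈ f.1 ∧ a ∈ g.1 ∧ b ∈ g.1

/-- The strong components of the face complex: classes of faces under crossing edges. -/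
def Patch : Type _ := Quot T.FaceRel

/-- Two darts with the same tail are related when they lie on a common face. -/
def DartRel (d d' : T.G.Dart) : Prop :=
  d.fst = d'.fst ∧ ∃ f ∈ T.faces, d.fst ∈ f ∧ d.snd ∈ f ∧ d'.snd ∈ f

/-- The vertices of the normalisation of the face complex: components of vertex links. -/
def Corner : Type _ := Quot T.DartRel

instance : Finite T.G.Dart := Finite.of_injective _ SimpleGraph.Dart.toProd_injective

instance : Finite T.Patch := inferInstanceAs (Finite (Quot _))

instance : Finite T.Corner := inferInstanceAs (Finite (Quot _))

noncomputable instance : Fintype T.Patch := Fintype.ofFinite _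

noncomputable instance : Fintype T.Corner := Fintype.ofFinite _

noncomputable instance : DecidableEq T.Corner := Classical.decEq _

noncomputable instance : Fintype T.G.edgeSet := Fintype.ofFinite _

variable {T}

theorem exists_two_faces {a b : V} (h : T.G.Adj a b) :
    ∃ f g : T.faces, f ≠ g ∧ (a ∈ f.1 ∧ b ∈ f.1) ∧ (a ∈ g.1 ∧ b ∈ g.1) ∧
      ∀ k : T.faces, a ∈ k.1 → b ∈ k.1 → k = f ∨ k = g := by
  obtain ⟨f, g, hfg, hs⟩ := Finset.card_eq_two.1 (T.edge_two_faces a b h)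
  have hf : f ∈ T.faces.filter (fun f => a ∈ f ∧ b ∈ f) := by simp [hs]
  have hg : g ∈ T.faces.filter (fun f => a ∈ f ∧ b ∈ f) := by simp [hs]
  rw [Finset.mem_filter] at hf hg
  refine ⟨⟨f, hf.1⟩, ⟨g, hg.1⟩, by simpa using hfg, hf.2, hg.2, fun k ha hb => ?_⟩
  have hk : k.1 ∈ T.faces.filter (fun f => a ∈ f ∧ b ∈ f) :=
    Finset.mem_filter.2 ⟨k.2, ha, hb⟩
  simpa [hs, Subtype.ext_iff] using hk

theorem exists_face (d : T.G.Dart) : ∃ f : T.faces, d.fst ∈ f.1 ∧ d.snd ∈ f.1 :=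
  let ⟨f, _, _, h, _⟩ := exists_two_faces d.adj
  ⟨f, h⟩

/-- A face on the given dart. -/
noncomputable def faceAt (d : T.G.Dart) : T.faces := (exists_face d).choose

theorem fst_mem_faceAt (d : T.G.Dart) : d.fst ∈ (faceAt d).1 := (exists_face d).choose_spec.1

theorem snd_mem_faceAt (d : T.G.Dart) : d.snd ∈ (faceAt d).1 := (exists_face d).choose_spec.2

/-- The corner containing the given dart. -/
def corner (d : T.G.Dart) : T.Corner := Quot.mk _ d

/-- The patch containing the given face. -/
def patch (f : T.faces) : T.Patch := Quot.mk _ f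

theorem patch_faceAt {d : T.G.Dart} {f : T.faces} (h1 : d.fst ∈ f.1) (h2 : d.snd ∈ f.1) :
    patch (faceAt d) = patch f :=
  Quot.sound ⟨_, _, d.fst_ne_snd, fst_mem_faceAt d, snd_mem_faceAt d, h1, h2⟩

/-- The vertex at which a corner sits. -/
def Corner.vertex : T.Corner → V := Quot.lift (fun d => d.fst) fun _ _ h => h.1

/-- The patch to which a corner belongs. -/
noncomputable def Corner.patch : T.Corner → T.Patch :=
  Quot.lift (fun d => PlaneTriangulation.patch (faceAt d)) fun _ _ ⟨h, f, hf, h1, h2, h3⟩ =>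
    (patch_faceAt (f := ⟨f, hf⟩) h1 h2).trans (patch_faceAt (f := ⟨f, hf⟩) (h ▸ h1) h3).symm

theorem corner_eq {d d' : T.G.Dart} (h : d.fst = d'.fst) {f : T.faces} (h1 : d.fst ∈ f.1)
    (h2 : d.snd ∈ f.1) (h3 : d'.snd ∈ f.1) : corner d = corner d' :=
  Quot.sound ⟨h, f.1, f.2, h1, h2, h3⟩

theorem patch_corner (d : T.G.Dart) : (corner d).patch = patch (faceAt d) := rfl

theorem patch_corner_symm (d : T.G.Dart) : (corner d.symm).patch = (corner d).patch := by
  rw [patch_corner, patch_corner]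
  exact patch_faceAt (snd_mem_faceAt d) (fst_mem_faceAt d)

theorem exists_dart (f : T.faces) : ∃ d : T.G.Dart, d.fst ∈ f.1 ∧ d.snd ∈ f.1 := by
  obtain ⟨a, ha, b, hb, hab⟩ := Finset.one_lt_card.1 (by rw [T.face_card f f.2]; norm_num)
  exact ⟨⟨(a, b), T.face_clique f f.2 a ha b hb hab⟩, ha, hb⟩

/-- A function on corners that agrees at the two ends of every edge is constant on each face. -/
theorem eq_of_mem_face {R : Type*} {x : T.Corner → R}
    (hx : ∀ d : T.G.Dart, x (corner d) = x (corner d.symm)) {f : T.faces} {d d' : T.G.Dart}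
    (h1 : d.fst ∈ f.1) (h2 : d.snd ∈ f.1) (h1' : d'.fst ∈ f.1) (h2' : d'.snd ∈ f.1) :
    x (corner d) = x (corner d') := by
  by_cases h : d.fst = d'.fst
  · rw [corner_eq h h1 h2 h2']
  · let e : T.G.Dart := ⟨(d.fst, d'.fst), T.face_clique f f.2 _ h1 _ h1' h⟩
    rw [corner_eq (d := d) (d' := e) rfl h1 h2 h1', hx e,
      corner_eq (d := e.symm) (d' := d') rfl h1' h1 h2']

theorem eq_of_patch_eq {R : Type*} {x : T.Corner → R}
    (hx : ∀ d : T.G.Dart, x (corner d) = x (corner d.symm)) {c c' : T.Corner}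
    (h : c.patch = c'.patch) : x c = x c' := by
  let y : T.Patch → R := Quot.lift (fun f => x (corner (exists_dart f).choose))
    fun f g ⟨a, b, hab, haf, hbf, hag, hbg⟩ => by
      let d : T.G.Dart := ⟨(a, b), T.face_clique f f.2 a haf b hbf hab⟩
      have hf := (exists_dart f).choose_spec
      have hg := (exists_dart g).choose_spec
      exact (eq_of_mem_face hx (d' := d) hf.1 hf.2 haf hbf).trans
        (eq_of_mem_face hx (d := d) hag hbg hg.1 hg.2)
  have key : ∀ c, x c = y c.patch := by
    rintro ⟨d⟩
    have hf := (exists_dart (faceAt d)).choose_spec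
    exact eq_of_mem_face hx (fst_mem_faceAt d) (snd_mem_faceAt d) hf.1 hf.2
  rw [key, key, h]

variable (T) in
/-- The mod `2` incidence vector of the edges inside a vertex set. -/
def edgesIn (t : Finset V) (e : T.G.edgeSet) : ZMod 2 := if e.1.toFinset ⊆ t then 1 else 0

variable (T) in
/-- The mod `2` incidence matrix of faces and edges. -/
def faceEdge : Matrix T.faces T.G.edgeSet (ZMod 2) := .of fun f => T.edgesIn f.1

/-- The edge underlying a dart. -/
def dartEdge (d : T.G.Dart) : T.G.edgeSet := ⟨d.edge, d.edge_mem⟩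

theorem dartEdge_surjective : Function.Surjective (dartEdge (T := T)) := by
  rintro ⟨e, he⟩
  induction e with
  | _ a b => exact ⟨⟨(a, b), he⟩, rfl⟩

variable (T) in
/-- The mod `2` incidence matrix of edges and corners. -/
noncomputable def edgeCorner : Matrix T.G.edgeSet T.Corner (ZMod 2) :=
  .of fun e => let d := (dartEdge_surjective e).choose
    Pi.single (corner d) 1 + Pi.single (corner d.symm) 1

theorem edgeCorner_dartEdge (d : T.G.Dart) :
    T.edgeCorner (dartEdge d) = Pi.single (corner d) 1 + Pi.single (corner d.symm) 1 := by
  have h := (dartEdge_surjective (dartEdge d)).choose_spec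
  change Pi.single (M := fun _ => ZMod 2) (corner (dartEdge_surjective (dartEdge d)).choose) 1
    + Pi.single (corner (dartEdge_surjective (dartEdge d)).choose.symm) 1 = _
  generalize (dartEdge_surjective (dartEdge d)).choose = d' at h
  rcases (SimpleGraph.dart_edge_eq_iff d' d).1 (congrArg Subtype.val h) with rfl | rfl
  · rfl
  · rw [SimpleGraph.Dart.symm_symm, add_comm]

theorem edgesIn_dartEdge (t : Finset V) (d : T.G.Dart) :
    T.edgesIn t (dartEdge d) = if d.fst ∈ t ∧ d.snd ∈ t then 1 else 0 := by
  simp [edgesIn, dartEdge, SimpleGraph.Dart.edge, Finset.subset_iff]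

/-- A triangle that passes through a single corner at each of its vertices is a cycle in the
normalised complex. -/
theorem edgesIn_vecMul_edgeCorner {a b c : V} (hab : T.G.Adj a b) (hbc : T.G.Adj b c)
    (hca : T.G.Adj c a)
    (ha : corner (⟨(a, b), hab⟩ : T.G.Dart) = corner ⟨(a, c), hca.symm⟩)
    (hb : corner (⟨(b, c), hbc⟩ : T.G.Dart) = corner ⟨(b, a), hab.symm⟩)
    (hc : corner (⟨(c, a), hca⟩ : T.G.Dart) = corner ⟨(c, b), hbc.symm⟩) :
    T.edgesIn {a, b, c} ᵥ* T.edgeCorner = 0 := by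
  have hE : Finset.univ.filter (fun e : T.G.edgeSet => e.1.toFinset ⊆ {a, b, c}) =
      {dartEdge ⟨(a, b), hab⟩, dartEdge ⟨(b, c), hbc⟩, dartEdge ⟨(c, a), hca⟩} := by
    ext e
    obtain ⟨⟨⟨x, y⟩, hxy⟩, rfl⟩ := dartEdge_surjective e
    have hne : x ≠ y := T.G.ne_of_adj hxy
    have := T.G.ne_of_adj hab
    have := T.G.ne_of_adj hbc
    have := T.G.ne_of_adj hca
    simp only [dartEdge, SimpleGraph.Dart.edge, Finset.mem_filter, Finset.mem_univ, true_and,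
      Finset.subset_iff, Sym2.mem_toFinset, Sym2.mem_iff, Finset.mem_insert,
      Finset.mem_singleton, Subtype.mk.injEq, Sym2.eq_iff, forall_eq_or_imp, forall_eq]
    grind
  have h2 : ∀ x : ZMod 2, x + x = 0 := CharTwo.add_self_eq_zero
  ext ℓ
  have hab' := T.G.ne_of_adj hab
  have hbc' := T.G.ne_of_adj hbc
  have hca' := T.G.ne_of_adj hca
  simp only [Matrix.vecMul, dotProduct, edgesIn, ite_mul, one_mul, zero_mul]
  rw [← Finset.sum_filter, hE, Finset.sum_insert, Finset.sum_insert, Finset.sum_singleton]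
  · simp only [edgeCorner_dartEdge, SimpleGraph.Dart.symm_mk, Prod.swap, ha, hb, hc,
      Pi.add_apply, Pi.zero_apply]
    linear_combination h2 ((Pi.single (corner (⟨(a, c), hca.symm⟩ : T.G.Dart)) 1 : _ → ZMod 2) ℓ)
      + h2 ((Pi.single (corner (⟨(b, a), hab.symm⟩ : T.G.Dart)) 1 : _ → ZMod 2) ℓ)
      + h2 ((Pi.single (corner (⟨(c, b), hbc.symm⟩ : T.G.Dart)) 1 : _ → ZMod 2) ℓ)
  · simp [dartEdge, SimpleGraph.Dart.edge]
    grind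
  · simp [dartEdge, SimpleGraph.Dart.edge]
    grind

theorem faceEdge_mul_edgeCorner : T.faceEdge * T.edgeCorner = 0 := by
  ext f ℓ
  obtain ⟨a, b, c, hab, hac, hbc, hf⟩ := Finset.card_eq_three.1 (T.face_card f f.2)
  have ha : a ∈ f.1 := by simp [hf]
  have hb : b ∈ f.1 := by simp [hf]
  have hc : c ∈ f.1 := by simp [hf]
  have h := edgesIn_vecMul_edgeCorner (T.face_clique f f.2 a ha b hb hab)
    (T.face_clique f f.2 b hb c hc hbc) (T.face_clique f f.2 c hc a ha hac.symm)
    (corner_eq rfl ha hb hc) (corner_eq rfl hb hc ha) (corner_eq rfl hc ha hb)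
  rw [← hf] at h
  exact congrFun h ℓ

theorem vecMul_faceEdge_dartEdge (x : T.faces → ZMod 2) (d : T.G.Dart) {f g : T.faces}
    (hfg : f ≠ g) (hf : d.fst ∈ f.1 ∧ d.snd ∈ f.1) (hg : d.fst ∈ g.1 ∧ d.snd ∈ g.1)
    (hall : ∀ k : T.faces, d.fst ∈ k.1 → d.snd ∈ k.1 → k = f ∨ k = g) :
    (x ᵥ* T.faceEdge) (dartEdge d) = x f + x g := by
  simp only [Matrix.vecMul, dotProduct, faceEdge, Matrix.of_apply, edgesIn_dartEdge, mul_ite,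
    mul_one, mul_zero]
  rw [← Finset.sum_filter, ← Finset.sum_pair hfg]
  congr 1
  ext k
  simp only [Finset.mem_filter, Finset.mem_univ, true_and, Finset.mem_insert,
    Finset.mem_singleton]
  exact ⟨fun h => hall k h.1 h.2, by rintro (rfl | rfl) <;> assumption⟩

theorem eq_of_vecMul_faceEdge {x : T.faces → ZMod 2} {d : T.G.Dart}
    (hx : (x ᵥ* T.faceEdge) (dartEdge d) = 0) {k l : T.faces}
    (hk : d.fst ∈ k.1 ∧ d.snd ∈ k.1) (hl : d.fst ∈ l.1 ∧ d.snd ∈ l.1) : x k = x l := by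
  obtain ⟨f, g, hfg, hf, hg, hall⟩ := exists_two_faces d.adj
  rw [vecMul_faceEdge_dartEdge x d hfg hf hg hall, CharTwo.add_eq_zero] at hx
  rcases hall k hk.1 hk.2 with rfl | rfl <;> rcases hall l hl.1 hl.2 with rfl | rfl <;>
    simp [hx]

theorem card_faces_le : T.faces.card ≤ T.faceEdge.rank + Fintype.card T.Patch := by
  rw [← Matrix.rank_transpose, ← Fintype.card_coe]
  refine Matrix.card_le_rank_add_card_of_ker _ patch fun x hx f g hfg => ?_
  rw [Matrix.mulVec_transpose] at hx
  exact congrArg (Quot.lift x fun f g ⟨a, b, hab, haf, hbf, hag, hbg⟩ =>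
    eq_of_vecMul_faceEdge (d := ⟨(a, b), T.face_clique f f.2 a haf b hbf hab⟩)
      (congrFun hx _) ⟨haf, hbf⟩ ⟨hag, hbg⟩) hfg

theorem card_corner_le :
    Fintype.card T.Corner ≤ T.edgeCorner.rank + Fintype.card T.Patch := by
  refine Matrix.card_le_rank_add_card_of_ker _ Corner.patch fun x hx c c' hcc => ?_
  refine eq_of_patch_eq (fun d => ?_) hcc
  have h := congrFun hx (dartEdge d)
  rw [Matrix.mulVec, edgeCorner_dartEdge, add_dotProduct] at h
  simpa [CharTwo.add_eq_zero] using h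

theorem rank_add_rank_le :
    T.faceEdge.rank + T.edgeCorner.rank ≤ Fintype.card T.G.edgeSet :=
  Matrix.rank_add_rank_le_card_of_mul_eq_zero faceEdge_mul_edgeCorner

theorem card_add_card_faces :
    Fintype.card V + T.faces.card = Fintype.card T.G.edgeSet + 2 := by
  have h := T.euler
  rw [← Nat.card_coe_set_eq, Nat.card_eq_fintype_card] at h
  omega

/-- Euler's formula bounds the defect of the normalisation. -/
theorem card_corner_add_two_le :
    Fintype.card T.Corner + 2 ≤ Fintype.card V + 2 * Fintype.card T.Patch := by
  have h1 := T.card_faces_le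
  have h2 := T.card_corner_le
  have h3 := T.rank_add_rank_le
  have h4 := T.card_add_card_faces
  omega

theorem exists_face_not_subset {t : Finset V} (ht : t.card ≤ 3) (f : T.faces) :
    ∃ g : T.faces, patch g = patch f ∧ ¬ g.1 ⊆ t := by
  have huniq : ∀ g : T.faces, g.1 ⊆ t → g.1 = t := fun g hg =>
    Finset.eq_of_subset_of_card_le hg (by rw [T.face_card g g.2]; exact ht)
  obtain ⟨d, hd⟩ := exists_dart f
  obtain ⟨k, l, hkl, hk, hl, -⟩ := exists_two_faces d.adj
  by_cases h : k.1 ⊆ t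
  · refine ⟨l, Quot.sound ⟨_, _, d.fst_ne_snd, hl.1, hl.2, hd.1, hd.2⟩, fun h' => ?_⟩
    exact hkl (Subtype.ext ((huniq k h).trans (huniq l h').symm))
  · exact ⟨k, Quot.sound ⟨_, _, d.fst_ne_snd, hk.1, hk.2, hd.1, hd.2⟩, h⟩

theorem exists_dart_of_mem_face {f : T.faces} {w : V} (hw : w ∈ f.1) :
    ∃ d : T.G.Dart, d.fst = w ∧ d.snd ∈ f.1 := by
  obtain ⟨u, hu, huw⟩ := Finset.exists_mem_ne (by rw [T.face_card f f.2]; norm_num) w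
  exact ⟨⟨(w, u), T.face_clique f f.2 w hw u hu huw.symm⟩, rfl, hu⟩

theorem exists_corner_notMem {t : Finset V} (ht : t.card ≤ 3) (C : T.Patch) :
    ∃ c : T.Corner, c.patch = C ∧ c.vertex ∉ t := by
  obtain ⟨f⟩ := C
  obtain ⟨g, hgf, hg⟩ := exists_face_not_subset ht f
  obtain ⟨w, hw, hwt⟩ := Finset.not_subset.1 hg
  obtain ⟨d, rfl, hd⟩ := exists_dart_of_mem_face hw
  exact ⟨corner d, (patch_faceAt hw hd).trans hgf, hwt⟩

theorem vertex_surjective (h4 : FourConnected T.G) :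
    Function.Surjective (Corner.vertex (T := T)) := by
  intro w
  by_contra hw
  have hno : ∀ u, ¬ T.G.Adj w u := fun u hu => hw ⟨corner ⟨(w, u), hu⟩, rfl⟩
  have : Nontrivial V := Fintype.one_lt_card_iff_nontrivial.1 (by have := h4.1; omega)
  obtain ⟨u, hu⟩ := exists_ne w
  refine hu (h4.spread (t := ∅) (by simp) (P := fun x => x = w) ?_ (a := w) (by simp) (by simp)
    rfl)
  rintro a b - - hab rfl
  exact absurd hab (hno b)

/-- The faces of a `4`-connected plane triangulation form a single patch. -/
theorem card_patch_le_one (h4 : FourConnected T.G) : Fintype.card T.Patch ≤ 1 := by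
  classical
  by_contra hc
  let P : Finset T.Corner := Finset.univ.filter fun x => ∃ y, y ≠ x ∧ y.vertex = x.vertex
  have hP : P.card < Finset.card (Finset.univ : Finset T.Patch) * 4 := by
    have h1 := card_filter_nontrivial_fiber_le _ (vertex_surjective h4)
    have h2 := T.card_corner_add_two_le
    rw [Finset.card_univ]
    change P.card + _ ≤ _ at h1
    omega
  obtain ⟨C, -, hC⟩ := Finset.exists_card_fiber_lt_of_card_lt_mul (f := Corner.patch) hP
  let t : Finset V := (P.filter fun x => x.patch = C).image Corner.vertex
  have ht : t.card ≤ 3 := Finset.card_image_le.trans (by omega)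
  have hsame : ∀ c c' : T.Corner, c.vertex ∉ t → c'.vertex = c.vertex → c.patch = C →
      c' = c := by
    intro c c' hct hcc hcC
    by_contra hne
    exact hct (Finset.mem_image_of_mem _ (by simpa [P, hcC] using ⟨c', hne, hcc⟩))
  obtain ⟨C', hC'⟩ : ∃ C', C' ≠ C := by
    have : Nontrivial T.Patch := Fintype.one_lt_card_iff_nontrivial.1 (by omega)
    exact exists_ne C
  obtain ⟨c, hc1, hc2⟩ := exists_corner_notMem ht C
  obtain ⟨c', hc1', hc2'⟩ := exists_corner_notMem ht C'
  have := h4.spread ht (P := fun w => ∃ k : T.Corner, k.vertex = w ∧ k.patch = C) ?_ hc2 hc2'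
    ⟨c, rfl, hc1⟩
  · obtain ⟨k, hk1, hk2⟩ := this
    rw [hsame k c' (hk1 ▸ hc2') hk1.symm hk2, hk2] at hc1'
    exact hC' hc1'.symm
  · rintro a b ha hb hab ⟨k, rfl, hk⟩
    refine ⟨corner (SimpleGraph.Dart.symm ⟨(k.vertex, b), hab⟩), rfl, ?_⟩
    rw [patch_corner_symm, hsame k (corner ⟨(k.vertex, b), hab⟩) ha rfl hk, hk]

/-- In a `4`-connected plane triangulation all vertex links are connected. -/
theorem vertex_injective (h4 : FourConnected T.G) :
    Function.Injective (Corner.vertex (T := T)) := by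
  have h1 := card_patch_le_one h4
  have h2 := T.card_corner_add_two_le
  exact (Fintype.bijective_iff_surjective_and_card _).2 ⟨vertex_surjective h4,
    le_antisymm (by omega) (Fintype.card_le_of_surjective _ (vertex_surjective h4))⟩ |>.1

theorem corner_eq_of_fst_eq (h4 : FourConnected T.G) {d d' : T.G.Dart} (h : d.fst = d'.fst) :
    corner d = corner d' :=
  vertex_injective h4 h

/-- In a `4`-connected plane triangulation every mod `2` cycle is a sum of faces. -/
theorem exists_vecMul_faceEdge (h4 : FourConnected T.G) {z : T.G.edgeSet → ZMod 2}
    (hz : z ᵥ* T.edgeCorner = 0) : ∃ x, x ᵥ* T.faceEdge = z := by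
  have hle : LinearMap.range T.faceEdge.vecMulLinear ≤ LinearMap.ker T.edgeCorner.vecMulLinear := by
    rintro _ ⟨x, rfl⟩
    simp [Matrix.vecMul_vecMul, faceEdge_mul_edgeCorner]
  have h0 := card_patch_le_one h4
  have h1 := T.card_faces_le
  have h2 := T.card_corner_le
  have h3 := T.card_add_card_faces
  have h4' := Fintype.card_le_of_surjective _ (vertex_surjective h4)
  have h5 := LinearMap.finrank_range_add_finrank_ker T.edgeCorner.vecMulLinear
  rw [finrank_fintype_fun_eq_card] at h5
  have hr : ∀ {m n : Type _} [Fintype m] [Fintype n] (A : Matrix m n (ZMod 2)),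
      finrank (ZMod 2) (LinearMap.range A.vecMulLinear) = A.rank := by
    intro m n _ _ A
    rw [← Matrix.rank_transpose, Matrix.rank, Matrix.mulVecLin_transpose]
  have heq := Submodule.eq_of_le_of_finrank_le hle (by
    rw [hr] at *
    omega)
  have : z ∈ LinearMap.range T.faceEdge.vecMulLinear := heq ▸ hz
  exact this

/-- A `4`-connected plane triangulation has no separating triangles. -/
theorem triangle_mem_faces (h4 : FourConnected T.G) {a b c : V} (hab : T.G.Adj a b)
    (hbc : T.G.Adj b c) (hca : T.G.Adj c a) : {a, b, c} ∈ T.faces := by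
  by_contra hno
  set t : Finset V := {a, b, c} with ht
  have htc : t.card ≤ 3 := Finset.card_le_three
  obtain ⟨x, hx⟩ := exists_vecMul_faceEdge h4 (edgesIn_vecMul_edgeCorner hab hbc hca
    (corner_eq_of_fst_eq h4 rfl) (corner_eq_of_fst_eq h4 rfl) (corner_eq_of_fst_eq h4 rfl))
  rw [← ht] at hx
  have hout : ∀ f : T.faces, ∃ w ∈ f.1, w ∉ t := fun f => by
    refine Finset.not_subset.1 fun hf => hno ?_
    rw [← Finset.eq_of_subset_of_card_le hf (by rw [T.face_card f f.2]; exact htc)]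
    exact f.2
  have hedge : ∀ {d : T.G.Dart} {k l : T.faces}, d.fst ∉ t → d.fst ∈ k.1 ∧ d.snd ∈ k.1 →
      d.fst ∈ l.1 ∧ d.snd ∈ l.1 → x k = x l := fun {d k l} hd hk hl =>
    eq_of_vecMul_faceEdge (by rw [hx, edgesIn_dartEdge, if_neg fun h => hd h.1]) hk hl
  have hvert : ∀ {k l : T.faces} {w : V}, w ∉ t → w ∈ k.1 → w ∈ l.1 → x k = x l := by
    intro k l w hw hk hl
    obtain ⟨d, rfl, hd⟩ := exists_dart_of_mem_face hk
    obtain ⟨d', hdd, hd'⟩ := exists_dart_of_mem_face hl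
    let φ : T.Corner → ZMod 2 := Quot.lift
      (fun e => if e.fst = d.fst then x (faceAt e) else 0) (by
        rintro e e' ⟨hee, f, hf, h1, h2, h3⟩
        by_cases he : e.fst = d.fst
        · have he' : e'.fst = d.fst := hee ▸ he
          simp only [he, he', if_true]
          rw [hedge (d := e) (l := ⟨f, hf⟩) (he ▸ hw) ⟨fst_mem_faceAt e, snd_mem_faceAt e⟩
              ⟨h1, h2⟩,
            hedge (d := e') (k := ⟨f, hf⟩) (he' ▸ hw) ⟨hee ▸ h1, h3⟩
              ⟨fst_mem_faceAt e', snd_mem_faceAt e'⟩]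
        · have he' : e'.fst ≠ d.fst := hee ▸ he
          simp only [he, he', if_false])
    have hφ : (if d.fst = d.fst then x (faceAt d) else 0)
        = if d'.fst = d.fst then x (faceAt d') else 0 :=
      congrArg φ (corner_eq_of_fst_eq h4 hdd.symm)
    rw [if_pos rfl, if_pos hdd] at hφ
    rw [hedge hw ⟨hk, hd⟩ ⟨fst_mem_faceAt d, snd_mem_faceAt d⟩, hφ,
      hedge (d := d') (l := l) (hdd ▸ hw) ⟨fst_mem_faceAt d', snd_mem_faceAt d'⟩
        ⟨hdd ▸ hl, hd'⟩]
  have hconst : ∀ k l : T.faces, x k = x l := by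
    intro k l
    obtain ⟨w, hwk, hw⟩ := hout k
    obtain ⟨u, hul, hu⟩ := hout l
    refine (h4.spread htc (P := fun y => ∀ f : T.faces, y ∈ f.1 → x k = x f) ?_ hw hu
      fun f hf => hvert hw hwk hf) l hul
    intro y y' hy hy' hyy h f hf
    let d : T.G.Dart := ⟨(y, y'), hyy⟩
    rw [h (faceAt d) (fst_mem_faceAt d)]
    exact hvert hy' (snd_mem_faceAt d) hf
  obtain ⟨f, g, hfg, hf, hg, hall⟩ := exists_two_faces hab
  have h := congrFun hx (dartEdge ⟨(a, b), hab⟩)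
  rw [vecMul_faceEdge_dartEdge x _ hfg hf hg hall, hconst f g, CharTwo.add_self_eq_zero,
    edgesIn_dartEdge, if_pos (by simp [ht])] at h
  exact zero_ne_one h

theorem ncard_neighborSet_inter (h4 : FourConnected T.G) {v a : V} (hva : T.G.Adj v a) :
    (T.G.neighborSet a ∩ T.G.neighborSet v).ncard = 2 := by
  rw [← T.edge_two_faces v a hva, ← Set.ncard_coe_finset]
  refine Set.ncard_congr (fun b _ => {v, a, b}) ?_ ?_ ?_
  · rintro b ⟨hab, hvb⟩
    simpa using triangle_mem_faces h4 hva hab hvb.symm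
  · rintro b c ⟨hab, hvb⟩ ⟨hac, hvc⟩ h
    have hb : b ∈ ({v, a, c} : Finset V) := h ▸ by simp
    have h1 := T.G.ne_of_adj hab
    have h2 := T.G.ne_of_adj hvb
    simp only [Finset.mem_insert, Finset.mem_singleton] at hb
    grind
  · intro f hf
    simp only [Finset.coe_filter, Set.mem_ofPred_eq] at hf
    obtain ⟨hfT, hvf, haf⟩ := hf
    have hpair : ({v, a} : Finset V).card = 2 := Finset.card_pair (T.G.ne_of_adj hva)
    obtain ⟨b, hb, hbn⟩ : ∃ b ∈ f, b ∉ ({v, a} : Finset V) :=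
      Finset.exists_mem_notMem_of_card_lt_card (by rw [hpair, T.face_card f hfT]; norm_num)
    simp only [Finset.mem_insert, Finset.mem_singleton, not_or] at hbn
    refine ⟨b, ⟨T.face_clique f hfT a haf b hb (Ne.symm hbn.2),
      T.face_clique f hfT v hvf b hb (Ne.symm hbn.1)⟩, ?_⟩
    refine Finset.eq_of_subset_of_card_le (by simp [Finset.insert_subset_iff, hvf, haf, hb]) ?_
    rw [T.face_card f hfT, Finset.card_eq_three.2
      ⟨v, a, b, T.G.ne_of_adj hva, Ne.symm hbn.1, Ne.symm hbn.2, rfl⟩]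

theorem preconnected_neighborSet (h4 : FourConnected T.G) (v : V) :
    (T.G.induce (T.G.neighborSet v)).Preconnected := by
  rintro ⟨a, ha⟩ ⟨b, hb⟩
  let φ : T.Corner → Prop := Quot.lift
    (fun d => ∃ h : d.fst = v, (T.G.induce (T.G.neighborSet v)).Reachable ⟨a, ha⟩
      ⟨d.snd, h ▸ d.adj⟩) (by
        have step : ∀ e e' : T.G.Dart, T.DartRel e e' →
            (∃ h : e.fst = v, (T.G.induce (T.G.neighborSet v)).Reachable ⟨a, ha⟩
              ⟨e.snd, h ▸ e.adj⟩) →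
            ∃ h : e'.fst = v, (T.G.induce (T.G.neighborSet v)).Reachable ⟨a, ha⟩
              ⟨e'.snd, h ▸ e'.adj⟩ := by
          rintro e e' ⟨hee, f, hf, h1, h2, h3⟩ ⟨h, hr⟩
          refine ⟨hee ▸ h, ?_⟩
          by_cases hs : e.snd = e'.snd
          · simpa only [hs] using hr
          · exact hr.trans (SimpleGraph.Adj.reachable
              (by exact T.face_clique f hf _ h2 _ h3 hs))
        intro e e' hee
        refine propext ⟨step e e' hee, step e' e ?_⟩
        obtain ⟨h, f, hf, h1, h2, h3⟩ := hee
        exact ⟨h.symm, f, hf, h ▸ h1, h3, h2⟩)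
  let da : T.G.Dart := ⟨(v, a), ha⟩
  let db : T.G.Dart := ⟨(v, b), hb⟩
  have hda : φ (corner da) := ⟨rfl, SimpleGraph.Reachable.refl _⟩
  have hdb : φ (corner db) := corner_eq_of_fst_eq h4 (d := da) (d' := db) rfl ▸ hda
  exact hdb.2

end PlaneTriangulation

/-- In a 4-connected plane triangulation, for every vertex `v` and chosen
neighbour `n ∈ N(v)`, the set `N(v) \ {n}` induces a path. -/
theorem stmt4 {V : Type*} [Fintype V] [DecidableEq V] (T : PlaneTriangulation V)
    (h4 : FourConnected T.G) (v n : V) (hn : n ∈ T.G.neighborSet v) :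
    IsPathGraph (T.G.induce (T.G.neighborSet v \ {n})) := by
  exact isPathGraph_induce_diff_singleton T.G _ (PlaneTriangulation.preconnected_neighborSet h4 v)
    (fun a ha => PlaneTriangulation.ncard_neighborSet_inter h4 ha) hn
end

section
/- Let P be a cubic 3-connected bipartite plane graph and G = P* its plane dual (an Eulerian plane triangulation). Then P has a Hamilton cycle if and only if G possesses two disjoint induced tree-subgraphs which together contain all vertices of G. Moreover, if X, Y are such trees, then the set of edges of P dual to the X–Y edges of G is the edge set of a Hamilton cycle of P. -/
/-- A combinatorial plane graph: a simple graph together with its set of faces,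
each given by the edge set of its boundary cycle, with each edge on exactly two
faces, satisfying Euler's formula. -/
structure PlaneGraph (V : Type*) [Fintype V] [DecidableEq V] where
  G : SimpleGraph V
  faces : Finset (Finset (Sym2 V))
  face_cycle : ∀ f ∈ faces, ∃ (v : V) (c : G.Walk v v), c.IsCycle ∧ c.edges.toFinset = f
  edge_two_faces : ∀ e ∈ G.edgeSet, (faces.filter (fun f => e ∈ f)).card = 2
  euler : (Fintype.card V : ℤ) - (G.edgeSet.ncard : ℤ) + (faces.card : ℤ) = 2

variable {V : Type*} [Fintype V] [DecidableEq V]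

/-- `P` is cubic: every vertex has degree 3. -/
def PlaneGraph.Cubic (P : PlaneGraph V) : Prop :=
  ∀ v : V, (P.G.neighborSet v).ncard = 3

/-- `P` is bipartite: properly 2-colourable. -/
def PlaneGraph.Bipartite (P : PlaneGraph V) : Prop :=
  ∃ c : V → Bool, ∀ a b : V, P.G.Adj a b → c a ≠ c b

/-- `P` is 3-connected. -/
def PlaneGraph.ThreeConnected (P : PlaneGraph V) : Prop :=
  4 ≤ Fintype.card V ∧ ∀ S : Set V, S.ncard ≤ 2 → (P.G.induce Sᶜ).Connected

/-- `P` has a 2-factor consisting only of facial 4-cycles: a set of faces of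
boundary length 4 whose boundary cycles are pairwise disjoint and cover every vertex. -/
def PlaneGraph.HasFacialSquareTwoFactor (P : PlaneGraph V) : Prop :=
  ∃ F ⊆ P.faces, (∀ f ∈ F, f.card = 4) ∧
    ∀ v : V, ∃! f, f ∈ F ∧ ∃ e ∈ f, v ∈ e

/-- A combinatorial sphere whose 1-skeleton is the connected cubic graph `Γ` and whose faces are
indexed by `F`, the boundary of the face `f` being the edge set `B f`. -/
structure IsCubicSphere {V F : Type*} [Fintype V] [Fintype F] (Γ : SimpleGraph V)
    (B : F → Set (Sym2 V)) : Prop where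
  connected : Γ.Connected
  cubic : ∀ v, (Γ.neighborSet v).ncard = 3
  boundary_subset : ∀ f, B f ⊆ Γ.edgeSet
  boundary_nonempty : ∀ f, (B f).Nonempty
  boundary_degree : ∀ f v, {w | s(v, w) ∈ B f}.ncard = 0 ∨ {w | s(v, w) ∈ B f}.ncard = 2
  two_faces : ∀ e ∈ Γ.edgeSet, ∃ f g, f ≠ g ∧ ∀ h, e ∈ B h ↔ h = f ∨ h = g
  euler : Fintype.card V + Fintype.card F = Γ.edgeSet.ncard + 2

/-- A set of edges is even if every vertex lies on an even number of its members. -/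
def IsEvenEdgeSet {V : Type*} (D : Set (Sym2 V)) : Prop :=
  ∀ v, Even {w | s(v, w) ∈ D}.ncard

/-- The set of edges lying both on a face in `X` and on a face outside `X`. -/
def faceCut {V F : Type*} (B : F → Set (Sym2 V)) (X : Set F) : Set (Sym2 V) :=
  {e | ∃ x ∈ X, ∃ y ∉ X, e ∈ B x ∧ e ∈ B y}

theorem SimpleGraph.Walk.IsCycle.ncard_edges_at {V : Type*} {Γ : SimpleGraph V} {u : V}
    {c : Γ.Walk u u} (hc : c.IsCycle) (v : V) :
    {w | s(v, w) ∈ c.edges}.ncard = 0 ∨ {w | s(v, w) ∈ c.edges}.ncard = 2 := by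
  by_cases hv : v ∈ c.support
  · right
    rw [← hc.ncard_neighborSet_toSubgraph_eq_two hv]
    congr 1
    ext w
    simp [Walk.adj_toSubgraph_iff_mem_edges]
  · left
    have : {w | s(v, w) ∈ c.edges} = ∅ := by
      ext w
      simp only [Set.mem_ofPred_eq, Set.mem_empty_iff_false, iff_false]
      exact fun h => hv (c.fst_mem_support_of_mem_edges h)
    simp [this]

theorem SimpleGraph.Walk.IsCycle.isEvenEdgeSet {V : Type*} {Γ : SimpleGraph V} {u : V}
    {c : Γ.Walk u u} (hc : c.IsCycle) : IsEvenEdgeSet {e | e ∈ c.edges} := fun v => by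
  rcases hc.ncard_edges_at v with h | h <;> simp only [Set.mem_ofPred_eq, h] <;> decide

theorem ncard_edges_at_eq {V : Type*} (D : Set (Sym2 V)) (v : V) :
    {e | v ∈ e ∧ e ∈ D}.ncard = {w | s(v, w) ∈ D}.ncard := by
  have : {e | v ∈ e ∧ e ∈ D} = (fun w => s(v, w)) '' {w | s(v, w) ∈ D} := by
    ext e
    simp only [Set.mem_ofPred_eq, Set.mem_image]
    constructor
    · rintro ⟨⟨w, rfl⟩, h⟩
      exact ⟨w, h, rfl⟩
    · rintro ⟨w, h, rfl⟩
      exact ⟨Sym2.mem_mk_left _ _, h⟩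
  rw [this]
  exact Set.ncard_image_of_injective _ fun a b h => by grind [Sym2.eq_iff]

/-- Three two-element sets such that every element of one of them lies in exactly two of them are
the three pairs from a three-element set. -/
theorem exists_pairwise_common {F : Type*} {A B C : Set F}
    (key : ∀ f, (f ∉ A ∧ f ∉ B ∧ f ∉ C) ∨ (f ∉ A ∧ f ∈ B ∧ f ∈ C) ∨
      (f ∈ A ∧ f ∉ B ∧ f ∈ C) ∨ (f ∈ A ∧ f ∈ B ∧ f ∉ C))
    (hA : ∃ f g, f ≠ g ∧ ∀ h, h ∈ A ↔ h = f ∨ h = g)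
    (hB : ∃ f g, f ≠ g ∧ ∀ h, h ∈ B ↔ h = f ∨ h = g)
    (hC : ∃ f g, f ≠ g ∧ ∀ h, h ∈ C ↔ h = f ∨ h = g) :
    ∃ p q r, p ≠ q ∧ p ≠ r ∧ q ≠ r ∧ (∀ f, f ∈ A ↔ f = q ∨ f = r) ∧
      (∀ f, f ∈ B ↔ f = p ∨ f = r) ∧ (∀ f, f ∈ C ↔ f = p ∨ f = q) := by
  obtain ⟨f₁, g₁, hne₁, h₁⟩ := hA
  obtain ⟨f₂, g₂, hne₂, h₂⟩ := hB
  obtain ⟨f₃, g₃, hne₃, h₃⟩ := hC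
  have kf₁ := key f₁
  have kg₁ := key g₁
  have kf₂ := key f₂
  have kg₂ := key g₂
  have kf₃ := key f₃
  have kg₃ := key g₃
  have hr : ∃ r, r ∈ A ∧ r ∈ B ∧ r ∉ C := by
    by_contra! hr
    have := hr f₁
    have := hr g₁
    grind
  have hq : ∃ q, q ∈ A ∧ q ∉ B ∧ q ∈ C := by
    by_contra! hq
    have := hq f₁
    have := hq g₁
    have := hq f₃
    have := hq g₃
    grind
  have hp : ∃ p, p ∉ A ∧ p ∈ B ∧ p ∈ C := by
    by_contra! hp
    have := hp f₃
    have := hp g₃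
    have := hp f₂
    have := hp g₂
    grind
  obtain ⟨r, hr⟩ := hr
  obtain ⟨q, hq⟩ := hq
  obtain ⟨p, hp⟩ := hp
  have hpq : p ≠ q := fun h => hp.1 (h ▸ hq.1)
  have hpr : p ≠ r := fun h => hp.1 (h ▸ hr.1)
  have hqr : q ≠ r := fun h => hq.2.1 (h ▸ hr.2.1)
  have pair : ∀ {S : Set F} {f g x y : F}, (∀ h, h ∈ S ↔ h = f ∨ h = g) → x ∈ S → y ∈ S →
      x ≠ y → ∀ h, h ∈ S ↔ h = x ∨ h = y := by
    intro S f g x y hS hx hy hxy h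
    rw [hS] at hx hy ⊢
    grind
  exact ⟨p, q, r, hpq, hpr, hqr, pair h₁ hq.1 hr.1 hqr, pair h₂ hp.2.1 hr.2.1 hpr,
    pair h₃ hp.2.2 hq.2.2 hpq⟩

namespace IsCubicSphere

variable {V F : Type*} [Fintype V] [Fintype F] {Γ : SimpleGraph V} {B : F → Set (Sym2 V)}

theorem exists_vertex_star (h : IsCubicSphere Γ B) (v : V) :
    ∃ (a b c : V) (p q r : F), a ≠ b ∧ a ≠ c ∧ b ≠ c ∧ p ≠ q ∧ p ≠ r ∧ q ≠ r ∧
      (∀ w, Γ.Adj v w ↔ w = a ∨ w = b ∨ w = c) ∧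
      (∀ f, s(v, a) ∈ B f ↔ f = q ∨ f = r) ∧
      (∀ f, s(v, b) ∈ B f ↔ f = p ∨ f = r) ∧
      (∀ f, s(v, c) ∈ B f ↔ f = p ∨ f = q) := by
  obtain ⟨a, b, c, hab, hac, hbc, hn⟩ := Set.ncard_eq_three.mp (h.cubic v)
  have hadj : ∀ w, Γ.Adj v w ↔ w = a ∨ w = b ∨ w = c := fun w => by
    rw [← SimpleGraph.mem_neighborSet, hn]; simp
  have key : ∀ f,
      (s(v, a) ∉ B f ∧ s(v, b) ∉ B f ∧ s(v, c) ∉ B f) ∨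
      (s(v, a) ∉ B f ∧ s(v, b) ∈ B f ∧ s(v, c) ∈ B f) ∨
      (s(v, a) ∈ B f ∧ s(v, b) ∉ B f ∧ s(v, c) ∈ B f) ∨
      (s(v, a) ∈ B f ∧ s(v, b) ∈ B f ∧ s(v, c) ∉ B f) := by
    intro f
    have hsub : ∀ w, s(v, w) ∈ B f → w = a ∨ w = b ∨ w = c := fun w hw =>
      (hadj w).mp (h.boundary_subset f hw)
    rcases h.boundary_degree f v with h0 | h2
    · rw [Set.ncard_eq_zero (Set.toFinite _)] at h0
      have : ∀ w, s(v, w) ∉ B f := fun w hw => by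
        have : w ∈ {w | s(v, w) ∈ B f} := hw
        simp [h0] at this
      simp [this]
    · obtain ⟨x, y, hxy, h2⟩ := Set.ncard_eq_two.mp h2
      have hm : ∀ w, s(v, w) ∈ B f ↔ w = x ∨ w = y := fun w => by
        have : w ∈ {w | s(v, w) ∈ B f} ↔ w ∈ ({x, y} : Set V) := by rw [h2]
        simpa using this
      have hx := hsub x ((hm x).mpr (.inl rfl))
      have hy := hsub y ((hm y).mpr (.inr rfl))
      simp only [hm]
      grind
  obtain ⟨f₁, g₁, hne₁, h₁⟩ := h.two_faces s(v, a) ((hadj a).mpr (by simp))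
  obtain ⟨f₂, g₂, hne₂, h₂⟩ := h.two_faces s(v, b) ((hadj b).mpr (by simp))
  obtain ⟨f₃, g₃, hne₃, h₃⟩ := h.two_faces s(v, c) ((hadj c).mpr (by simp))
  obtain ⟨p, q, r, hpqr⟩ := exists_pairwise_common (A := {f | s(v, a) ∈ B f})
    (B := {f | s(v, b) ∈ B f}) (C := {f | s(v, c) ∈ B f}) key
    ⟨f₁, g₁, hne₁, h₁⟩ ⟨f₂, g₂, hne₂, h₂⟩ ⟨f₃, g₃, hne₃, h₃⟩
  exact ⟨a, b, c, p, q, r, hab, hac, hbc, hpqr.1, hpqr.2.1, hpqr.2.2.1, hadj, hpqr.2.2.2⟩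

/-- A set of faces that contains both or neither of any two faces sharing an edge is trivial. -/
theorem eq_empty_or_univ (h : IsCubicSphere Γ B) {X : Set F}
    (hX : ∀ f g e, e ∈ B f → e ∈ B g → (f ∈ X ↔ g ∈ X)) : X = ∅ ∨ X = Set.univ := by
  have base : ∀ v a b f g, s(v, a) ∈ B f → s(v, b) ∈ B g → (f ∈ X ↔ g ∈ X) := by
    intro v a b f g hf hg
    obtain ⟨x, y, z, p, q, r, -, -, -, -, -, -, hadj, hx, hy, hz⟩ := h.exists_vertex_star v
    have ha := (hadj a).mp (h.boundary_subset f hf)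
    have hb := (hadj b).mp (h.boundary_subset g hg)
    have h₁ : p ∈ X ↔ q ∈ X := hX p q s(v, z) ((hz p).mpr (by simp)) ((hz q).mpr (by simp))
    have h₂ : p ∈ X ↔ r ∈ X := hX p r s(v, y) ((hy p).mpr (by simp)) ((hy r).mpr (by simp))
    grind
  have walk : ∀ u v, Γ.Walk u v → ∀ a b f g, s(u, a) ∈ B f → s(v, b) ∈ B g →
      (f ∈ X ↔ g ∈ X) := by
    intro u v w
    induction w with
    | nil => exact base _
    | @cons u u' v hadj w ih =>
      intro a b f g hf hg
      obtain ⟨k, _, -, hk⟩ := h.two_faces s(u, u') hadj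
      have hk : s(u, u') ∈ B k := (hk k).mpr (.inl rfl)
      exact (base u a u' f k hf hk).trans (ih u b k g (by rwa [Sym2.eq_swap]) hg)
  have all : ∀ f g, f ∈ X ↔ g ∈ X := by
    intro f g
    obtain ⟨e, he⟩ := h.boundary_nonempty f
    obtain ⟨e', he'⟩ := h.boundary_nonempty g
    induction e with | h u a =>
    induction e' with | h v b =>
    obtain ⟨w⟩ := h.connected.preconnected u v
    exact walk u v w a b f g he he'
  rcases X.eq_empty_or_nonempty with h0 | ⟨f, hf⟩
  · exact .inl h0
  · exact .inr (Set.eq_univ_of_forall fun g => (all f g).mp hf)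

theorem mem_faceCut_iff (h : IsCubicSphere Γ B) {X : Set F} {e : Sym2 V} {f g : F} (hfg : f ≠ g)
    (hf : e ∈ B f) (hg : e ∈ B g) : e ∈ faceCut B X ↔ ¬(f ∈ X ↔ g ∈ X) := by
  obtain ⟨p, q, hpq, hB⟩ := h.two_faces e (h.boundary_subset f hf)
  simp only [faceCut, Set.mem_ofPred_eq, hB] at *
  constructor
  · rintro ⟨x, hx, y, hy, hx', hy'⟩
    have : x ≠ y := fun h => hy (h ▸ hx)
    grind
  · intro hn
    by_cases hfX : f ∈ X
    · exact ⟨f, hfX, g, by tauto, hf, hg⟩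
    · exact ⟨g, by tauto, f, hfX, hg, hf⟩

theorem faceCut_subset (h : IsCubicSphere Γ B) (X : Set F) : faceCut B X ⊆ Γ.edgeSet := by
  rintro e ⟨x, -, -, -, hx, -⟩
  exact h.boundary_subset x hx

theorem exists_vertex_star_faceCut (h : IsCubicSphere Γ B) (X : Set F) (v : V) :
    ∃ (a b c : V) (p q r : F), a ≠ b ∧ a ≠ c ∧ b ≠ c ∧ p ≠ q ∧ p ≠ r ∧ q ≠ r ∧
      (∀ w, Γ.Adj v w ↔ w = a ∨ w = b ∨ w = c) ∧
      s(v, a) ∈ B q ∧ s(v, a) ∈ B r ∧ s(v, b) ∈ B p ∧ s(v, b) ∈ B r ∧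
      s(v, c) ∈ B p ∧ s(v, c) ∈ B q ∧
      (s(v, a) ∈ faceCut B X ↔ ¬(q ∈ X ↔ r ∈ X)) ∧
      (s(v, b) ∈ faceCut B X ↔ ¬(p ∈ X ↔ r ∈ X)) ∧
      (s(v, c) ∈ faceCut B X ↔ ¬(p ∈ X ↔ q ∈ X)) := by
  obtain ⟨a, b, c, p, q, r, hab, hac, hbc, hpq, hpr, hqr, hadj, ha, hb, hc⟩ :=
    h.exists_vertex_star v
  have haq := (ha q).mpr (by simp)
  have har := (ha r).mpr (by simp)
  have hbp := (hb p).mpr (by simp)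
  have hbr := (hb r).mpr (by simp)
  have hcp := (hc p).mpr (by simp)
  have hcq := (hc q).mpr (by simp)
  exact ⟨a, b, c, p, q, r, hab, hac, hbc, hpq, hpr, hqr, hadj, haq, har, hbp, hbr, hcp, hcq,
    h.mem_faceCut_iff hqr haq har, h.mem_faceCut_iff hpr hbp hbr, h.mem_faceCut_iff hpq hcp hcq⟩

/-- At a vertex, a face cut contains exactly two edges unless all three faces around the vertex,
which are pairwise adjacent, lie on the same side. -/
theorem ncard_faceCut_at (h : IsCubicSphere Γ B) (X : Set F) (v : V) :
    {w | s(v, w) ∈ faceCut B X}.ncard = 2 ∨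
      ({w | s(v, w) ∈ faceCut B X}.ncard = 0 ∧ ∃ p q r : F, p ≠ q ∧ p ≠ r ∧ q ≠ r ∧
        (p ∈ X ↔ q ∈ X) ∧ (p ∈ X ↔ r ∈ X) ∧
        (B p ∩ B q).Nonempty ∧ (B p ∩ B r).Nonempty ∧ (B q ∩ B r).Nonempty) := by
  obtain ⟨a, b, c, p, q, r, hab, hac, hbc, hpq, hpr, hqr, hadj, haq, har, hbp, hbr, hcp, hcq,
    ha, hb, hc⟩ := h.exists_vertex_star_faceCut X v
  have hmem : {w | s(v, w) ∈ faceCut B X} = {w | (w = a ∧ ¬(q ∈ X ↔ r ∈ X)) ∨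
      (w = b ∧ ¬(p ∈ X ↔ r ∈ X)) ∨ (w = c ∧ ¬(p ∈ X ↔ q ∈ X))} := by
    ext w
    simp only [Set.mem_ofPred_eq, ← ha, ← hb, ← hc]
    constructor
    · intro hw
      rcases (hadj w).mp (h.faceCut_subset X hw) with rfl | rfl | rfl <;> simp [hw]
    · rintro (⟨rfl, hw⟩ | ⟨rfl, hw⟩ | ⟨rfl, hw⟩) <;> exact hw
  rw [hmem]
  have hstar : (B p ∩ B q).Nonempty ∧ (B p ∩ B r).Nonempty ∧ (B q ∩ B r).Nonempty :=
    ⟨⟨_, hcp, hcq⟩, ⟨_, hbp, hbr⟩, ⟨_, haq, har⟩⟩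
  have hpair : ∀ x y : V, x ≠ y → {w | w = x ∨ w = y}.ncard = 2 := fun x y hxy =>
    Set.ncard_pair hxy
  by_cases hp : p ∈ X <;> by_cases hq : q ∈ X <;> by_cases hr : r ∈ X <;>
    simp only [hp, hq, hr, not_true_eq_false, not_false_eq_true, iff_true, iff_false,
      and_true, and_false, or_false, false_or]
  all_goals first
    | exact .inl (hpair _ _ ‹_›)
    | exact .inr ⟨Set.ncard_empty V, p, q, r, hpq, hpr, hqr, iff_of_true hp hq, iff_of_true hp hr,
        hstar⟩
    | exact .inr ⟨Set.ncard_empty V, p, q, r, hpq, hpr, hqr, iff_of_false hp hq,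
        iff_of_false hp hr, hstar⟩

theorem isEvenEdgeSet_faceCut (h : IsCubicSphere Γ B) (X : Set F) :
    IsEvenEdgeSet (faceCut B X) := fun v => by
  rcases h.ncard_faceCut_at X v with h | ⟨h, -⟩ <;> rw [h] <;> decide

end IsCubicSphere

theorem finrank_ker_le_one_of_const {ι K M : Type*} [Fintype ι] [Field K] [AddCommGroup M]
    [Module K M] (φ : (ι → K) →ₗ[K] M) (hφ : ∀ x, φ x = 0 → ∀ i j, x i = x j) :
    Module.finrank K (LinearMap.ker φ) ≤ 1 := by
  have hle : LinearMap.ker φ ≤ Submodule.span K {(1 : ι → K)} := by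
    intro x hx
    rw [Submodule.mem_span_singleton]
    rcases isEmpty_or_nonempty ι with hι | ⟨⟨i⟩⟩
    · exact ⟨0, Subsingleton.elim _ _⟩
    · exact ⟨x i, funext fun j => by simp [hφ x hx i j]⟩
  refine (Submodule.finrank_mono hle).trans ?_
  simpa using finrank_span_le_card (R := K) ({(1 : ι → K)} : Set (ι → K))

open Matrix in
theorem Matrix.ker_mulVecLin_le_range {ι κ ρ K : Type*} [Fintype ι] [Fintype κ] [Fintype ρ]
    [Field K] (M : Matrix ι κ K) (N : Matrix κ ρ K) (hMN : M * N = 0)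
    (hM : ∀ x, x ᵥ* M = 0 → ∀ i j, x i = x j) (hN : ∀ y, N *ᵥ y = 0 → ∀ i j, y i = y j)
    (hcard : Fintype.card ι + Fintype.card ρ = Fintype.card κ + 2) :
    LinearMap.ker M.mulVecLin ≤ LinearMap.range N.mulVecLin := by
  have hle : LinearMap.range N.mulVecLin ≤ LinearMap.ker M.mulVecLin := by
    rw [LinearMap.range_le_ker_iff, ← Matrix.mulVecLin_mul, hMN]
    exact Matrix.mulVecLin_zero
  have h₁ := finrank_ker_le_one_of_const Mᵀ.mulVecLin
    (fun x hx => hM x (by simpa [Matrix.mulVec_transpose] using hx))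
  have h₂ := finrank_ker_le_one_of_const N.mulVecLin (fun x hx => hN x (by simpa using hx))
  have r₁ := LinearMap.finrank_range_add_finrank_ker Mᵀ.mulVecLin
  have r₂ := LinearMap.finrank_range_add_finrank_ker N.mulVecLin
  have r₃ := LinearMap.finrank_range_add_finrank_ker M.mulVecLin
  have ht : Module.finrank K (LinearMap.range Mᵀ.mulVecLin) =
      Module.finrank K (LinearMap.range M.mulVecLin) := M.rank_transpose
  simp only [Module.finrank_fintype_fun_eq_card] at r₁ r₂ r₃
  exact (Submodule.eq_of_le_of_finrank_le hle (by omega)).ge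

theorem SimpleGraph.Walk.forall_mem_support_iff {V : Type*} {Γ : SimpleGraph V} {T : Set V}
    {u v : V} (w : Γ.Walk u v) (hT : ∀ a b, s(a, b) ∈ w.edges → (a ∈ T ↔ b ∈ T)) :
    ∀ x ∈ w.support, u ∈ T ↔ x ∈ T := by
  induction w with
  | nil => simp
  | @cons a b c hadj w ih =>
    intro x hx
    rw [Walk.support_cons, List.mem_cons] at hx
    rcases hx with rfl | hx
    · rfl
    · exact (hT a b (by simp)).trans
        (ih (fun a b h => hT a b (by rw [Walk.edges_cons]; exact List.mem_cons_of_mem _ h)) x hx)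

/-- An even set of edges of a Hamiltonian cycle is empty or contains the whole cycle. -/
theorem SimpleGraph.Walk.IsHamiltonianCycle.eq_empty_or_eq_edges {V : Type*} [DecidableEq V]
    {Γ : SimpleGraph V} {u : V} {w : Γ.Walk u u} (hw : w.IsHamiltonianCycle) {D : Set (Sym2 V)}
    (hD : D ⊆ {e | e ∈ w.edges}) (heven : IsEvenEdgeSet D) :
    D = ∅ ∨ D = {e | e ∈ w.edges} := by
  have htwo : ∀ v x y, s(v, x) ∈ D → s(v, y) ∈ w.edges → s(v, y) ∈ D := by
    intro v x y hx hy
    have hsub : {z | s(v, z) ∈ D} ⊆ {z | s(v, z) ∈ w.edges} := fun z hz => hD hz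
    have hwcard : {z | s(v, z) ∈ w.edges}.ncard = 2 := by
      rcases hw.isCycle.ncard_edges_at v with h0 | h2
      · have hfin : {z | s(v, z) ∈ w.edges}.Finite :=
          (w.support.finite_toSet).subset fun z hz => w.snd_mem_support_of_mem_edges hz
        rw [Set.ncard_eq_zero hfin] at h0
        exact absurd (show y ∈ {z | s(v, z) ∈ w.edges} from hy) (by simp [h0])
      · exact h2
    have hfin : {z | s(v, z) ∈ w.edges}.Finite := Set.finite_of_ncard_ne_zero (by omega)
    have hpos : 0 < {z | s(v, z) ∈ D}.ncard := (Set.ncard_pos (hfin.subset hsub)).mpr ⟨x, hx⟩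
    have hge : 2 ≤ {z | s(v, z) ∈ D}.ncard := by
      obtain ⟨k, hk⟩ := heven v
      omega
    exact (Set.eq_of_subset_of_ncard_le hsub (by omega) hfin).ge hy
  let T : Set V := {v | ∃ x, s(v, x) ∈ D}
  have hT : ∀ a b, s(a, b) ∈ w.edges → (a ∈ T ↔ b ∈ T) := by
    have : ∀ a b, s(a, b) ∈ w.edges → a ∈ T → b ∈ T := fun a b hab ⟨x, hx⟩ =>
      ⟨a, by rw [Sym2.eq_swap]; exact htwo a x b hx hab⟩
    exact fun a b hab => ⟨this a b hab, this b a (by rwa [Sym2.eq_swap])⟩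
  have hall := fun x => w.forall_mem_support_iff hT x (hw.mem_support x)
  rcases D.eq_empty_or_nonempty with h0 | ⟨e, he⟩
  · exact .inl h0
  · right
    refine hD.antisymm fun e' he' => ?_
    induction e with | h a b =>
    induction e' with | h a' b' =>
    obtain ⟨x, hx⟩ := (hall a').mp ((hall a).mpr ⟨b, he⟩)
    exact htwo a' x b' hx he'

namespace IsCubicSphere

variable {V F : Type*} [Fintype V] [Fintype F] {Γ : SimpleGraph V} {B : F → Set (Sym2 V)}

/-- Every even set of edges of a cubic sphere is a face cut. -/
theorem exists_faceCut_eq (h : IsCubicSphere Γ B) {D : Set (Sym2 V)} (hD : D ⊆ Γ.edgeSet)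
    (heven : IsEvenEdgeSet D) : ∃ X, faceCut B X = D := by
  classical
  let M : Matrix V Γ.edgeSet (ZMod 2) := fun v e => if v ∈ e.1 then 1 else 0
  let N : Matrix Γ.edgeSet F (ZMod 2) := fun e f => if e.1 ∈ B f then 1 else 0
  have hdeg : ∀ (C : Set (Sym2 V)), C ⊆ Γ.edgeSet → IsEvenEdgeSet C → ∀ v,
      ∑ e : Γ.edgeSet, M v e * (if e.1 ∈ C then 1 else 0) = 0 := by
    intro C hC hCe v
    simp only [M, ← ite_and, mul_ite, mul_one, mul_zero]
    rw [Finset.sum_boole, ZMod.natCast_eq_zero_iff_even]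
    convert hCe v using 1
    rw [← ncard_edges_at_eq, ← Set.ncard_coe_finset,
      ← Set.ncard_image_of_injective _ Subtype.val_injective]
    congr 1
    ext e
    simp only [Finset.coe_filter, Finset.mem_univ, true_and, Set.mem_image, Set.mem_ofPred_eq,
      Subtype.exists]
    constructor
    · rintro ⟨e, he, hv, rfl⟩
      exact hv.symm
    · rintro ⟨hv, he⟩
      exact ⟨e, hC he, ⟨he, hv⟩, rfl⟩
  have hsum : ∀ (y : F → ZMod 2) (e : Γ.edgeSet) (f g : F), f ≠ g → e.1 ∈ B f → e.1 ∈ B g →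
      (N.mulVec y) e = y f + y g := by
    intro y e f g hfg hf hg
    obtain ⟨p, q, hpq, hB⟩ := h.two_faces e.1 e.2
    have hB' : ∀ k, e.1 ∈ B k ↔ k = f ∨ k = g := by
      intro k
      rw [hB] at hf hg ⊢
      grind
    simp only [Matrix.mulVec, dotProduct, N, ite_mul, one_mul, zero_mul, hB']
    rw [← Finset.sum_filter, show Finset.univ.filter (fun k => k = f ∨ k = g) = {f, g} by
      ext; simp, Finset.sum_pair hfg]
  have hker := Matrix.ker_mulVecLin_le_range M N ?_ ?_ ?_ ?_
  · have hmem : (fun e : Γ.edgeSet => if e.1 ∈ D then (1 : ZMod 2) else 0) ∈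
        LinearMap.ker M.mulVecLin := by
      rw [LinearMap.mem_ker]
      ext v
      exact hdeg D hD heven v
    obtain ⟨y, hy⟩ := hker hmem
    refine ⟨{f | y f = 1}, Set.ext fun e => ?_⟩
    by_cases he : e ∈ Γ.edgeSet
    · obtain ⟨f, g, hfg, hB⟩ := h.two_faces e he
      have hf := (hB f).mpr (.inl rfl)
      have hg := (hB g).mpr (.inr rfl)
      rw [h.mem_faceCut_iff hfg hf hg]
      have hval := congrFun hy ⟨e, he⟩
      rw [Matrix.mulVecLin_apply, hsum y ⟨e, he⟩ f g hfg hf hg] at hval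
      have hbit : ∀ a b : ZMod 2, a + b = 1 ↔ ¬(a = 1 ↔ b = 1) := by decide
      simp only [Set.mem_ofPred_eq, ← hbit, hval]
      by_cases heD : e ∈ D <;> simp [heD]
    · exact iff_of_false (fun h' => he (h.faceCut_subset _ h')) (fun h' => he (hD h'))
  · ext v f
    rw [Matrix.mul_apply]
    exact hdeg (B f) (h.boundary_subset f)
      (fun v => by rcases h.boundary_degree f v with h | h <;> rw [h] <;> decide) v
  · intro x hx i j
    obtain ⟨w⟩ := h.connected.preconnected i j
    induction w with
    | nil => rfl
    | @cons a b c hadj w ih =>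
      rw [← ih]
      have := congrFun hx ⟨s(a, b), hadj⟩
      simp only [Matrix.vecMul, dotProduct, M, mul_ite, mul_one, mul_zero, Sym2.mem_iff,
        Pi.zero_apply] at this
      rw [← Finset.sum_filter, show Finset.univ.filter (fun k => k = a ∨ k = b) = {a, b} by
        ext; simp, Finset.sum_pair hadj.ne] at this
      exact (CharTwo.add_eq_zero).mp this
  · intro y hy
    have hX := h.eq_empty_or_univ (X := {f | y f = 1}) fun f g e hf hg => by
      by_cases hfg : f = g
      · rw [hfg]
      · have := hsum y ⟨e, h.boundary_subset f hf⟩ f g hfg hf hg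
        rw [hy, Pi.zero_apply, eq_comm, CharTwo.add_eq_zero] at this
        simp only [Set.mem_ofPred_eq, this]
    have hbit : ∀ a : ZMod 2, a = 1 ∨ a = 0 := by decide
    rcases hX with hX | hX
    · have : ∀ f, y f = 0 := fun f => (hbit (y f)).resolve_left fun hf => by
        have : f ∈ {f | y f = 1} := hf
        simp [hX] at this
      simp [this]
    · have : ∀ f, y f = 1 := fun f => by
        have : f ∈ {f | y f = 1} := hX ▸ Set.mem_univ f
        exact this
      simp [this]
  · rw [h.euler, Set.ncard_eq_toFinset_card', Set.toFinset_card]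

end IsCubicSphere

theorem SimpleGraph.IsAcyclic.not_triangle {V : Type*} {G : SimpleGraph V} (hG : G.IsAcyclic)
    {a b c : V} (hab : G.Adj a b) (hbc : G.Adj b c) (hca : G.Adj c a) : False := by
  refine hG (.cons hab (.cons hbc (.cons hca .nil))) ?_
  rw [Walk.cons_isCycle_iff]
  have := hab.ne
  have := hbc.ne
  have := hca.ne
  simp [Walk.cons_isPath_iff]
  grind

theorem SimpleGraph.Walk.IsCycle.isHamiltonianCycle_of_mem {V : Type*} [DecidableEq V]
    {Γ : SimpleGraph V} {u : V} {w : Γ.Walk u u} (hw : w.IsCycle) (hmem : ∀ v, v ∈ w.support) :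
    w.IsHamiltonianCycle := by
  rw [isHamiltonianCycle_iff_isCycle_and_support_count_tail_eq_one]
  refine ⟨hw, fun v => List.count_eq_one_of_mem hw.support_nodup ?_⟩
  have := hmem v
  rw [← Walk.cons_tail_support, List.mem_cons] at this
  rcases this with rfl | h
  · exact w.end_mem_tail_support hw.not_nil
  · exact h

theorem SimpleGraph.Preconnected.mem_iff_of_adj {V : Type*} {G : SimpleGraph V} {X S : Set V}
    (hX : (G.induce X).Preconnected)
    (hS : ∀ f ∈ X, ∀ g ∈ X, G.Adj f g → (f ∈ S ↔ g ∈ S)) {f g : V} (hf : f ∈ X) (hg : g ∈ X) :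
    f ∈ S ↔ g ∈ S := by
  obtain ⟨w⟩ := hX ⟨f, hf⟩ ⟨g, hg⟩
  exact w.forall_mem_support_iff (T := {x : X | x.1 ∈ S})
    (fun a b hab => hS a.1 a.2 b.1 b.2 (w.adj_of_mem_edges hab)) _ w.end_mem_support

namespace IsCubicSphere

variable {V F : Type*} [Fintype V] [Fintype F] {Γ : SimpleGraph V} {B : F → Set (Sym2 V)}
  {G : SimpleGraph F} {X : Set F}

theorem ncard_faceCut_at_eq_two (h : IsCubicSphere Γ B)
    (hG : ∀ f g, G.Adj f g ↔ f ≠ g ∧ (B f ∩ B g).Nonempty) (hX : (G.induce X).IsAcyclic)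
    (hY : (G.induce Xᶜ).IsAcyclic) (v : V) : {w | s(v, w) ∈ faceCut B X}.ncard = 2 := by
  rcases h.ncard_faceCut_at X v with h2 | ⟨-, p, q, r, hpq, hpr, hqr, h₁, h₂, npq, npr, nqr⟩
  · exact h2
  · have apq : G.Adj p q := (hG p q).mpr ⟨hpq, npq⟩
    have aqr : G.Adj q r := (hG q r).mpr ⟨hqr, nqr⟩
    have arp : G.Adj r p := ((hG p r).mpr ⟨hpr, npr⟩).symm
    by_cases hp : p ∈ X
    · exact (hX.not_triangle (a := ⟨p, hp⟩) (b := ⟨q, h₁.mp hp⟩) (c := ⟨r, h₂.mp hp⟩)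
        apq aqr arp).elim
    · exact (hY.not_triangle (a := ⟨p, hp⟩) (b := ⟨q, fun hq => hp (h₁.mpr hq)⟩)
        (c := ⟨r, fun hr => hp (h₂.mpr hr)⟩) apq aqr arp).elim

/-- A partition of the faces into two induced trees of the dual graph is separated by a
Hamiltonian cycle. -/
theorem exists_isHamiltonianCycle_edges_eq [DecidableEq V] (h : IsCubicSphere Γ B)
    (hG : ∀ f g, G.Adj f g ↔ f ≠ g ∧ (B f ∩ B g).Nonempty) (hX : (G.induce X).IsTree)
    (hY : (G.induce Xᶜ).IsTree) :
    ∃ (v : V) (w : Γ.Walk v v), w.IsHamiltonianCycle ∧ {e | e ∈ w.edges} = faceCut B X := by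
  have htwo := h.ncard_faceCut_at_eq_two hG hX.isAcyclic hY.isAcyclic
  have hsub := h.faceCut_subset X
  let H : SimpleGraph V := SimpleGraph.fromEdgeSet (faceCut B X)
  have hH : ∀ a b, H.Adj a b ↔ s(a, b) ∈ faceCut B X := fun a b => by
    simp only [H, SimpleGraph.fromEdgeSet_adj, and_iff_left_iff_imp]
    exact fun hab => (show Γ.Adj a b from hsub hab).ne
  have hHΓ : H ≤ Γ := fun a b hab => hsub ((hH a b).mp hab)
  have hHn : ∀ v, H.neighborSet v = {w | s(v, w) ∈ faceCut B X} := fun v => Set.ext (hH v)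
  obtain ⟨v⟩ := h.connected.nonempty
  have hHc : H.IsCycles := fun v _ => by rw [hHn]; exact htwo v
  obtain ⟨c, hc, -⟩ := hHc.exists_cycle_toSubgraph_verts_eq_connectedComponentSupp
    (c := H.connectedComponentMk v) (v := v) rfl
    (Set.nonempty_of_ncard_ne_zero (by rw [hHn, htwo]; decide))
  let w : Γ.Walk v v := c.mapLe hHΓ
  have hw : w.IsCycle := hc.mapLe hHΓ
  have hwe : ∀ e ∈ w.edges, e ∈ faceCut B X := by
    intro e he
    have he : e ∈ c.edges := by simpa [w] using he
    have := c.edges_subset_edgeSet he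
    induction e with | h a b => exact (hH a b).mp this
  obtain ⟨S, hS⟩ := h.exists_faceCut_eq (D := {e | e ∈ w.edges})
    (fun e he => w.edges_subset_edgeSet he) hw.isEvenEdgeSet
  have hinside : ∀ f g, G.Adj f g → (f ∈ X ↔ g ∈ X) → (f ∈ S ↔ g ∈ S) := by
    intro f g hfg hfgX
    obtain ⟨hne, e, hef, heg⟩ := (hG f g).mp hfg
    by_contra hcon
    have he : e ∈ faceCut B S := (h.mem_faceCut_iff hne hef heg).mpr hcon
    rw [hS] at he
    exact (h.mem_faceCut_iff hne hef heg).mp (hwe e he) hfgX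
  have hSX : ∀ f ∈ X, ∀ g ∈ X, f ∈ S ↔ g ∈ S := fun f hf g hg =>
    hX.connected.preconnected.mem_iff_of_adj
      (fun f hf g hg hfg => hinside f g hfg (iff_of_true hf hg)) hf hg
  have hSY : ∀ f ∉ X, ∀ g ∉ X, f ∈ S ↔ g ∈ S := fun f hf g hg =>
    hY.connected.preconnected.mem_iff_of_adj
      (fun f hf g hg hfg => hinside f g hfg (iff_of_false hf hg)) hf hg
  obtain ⟨e, he⟩ : ∃ e, e ∈ w.edges := List.exists_mem_of_ne_nil _ (by
    simpa using hw.not_nil)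
  obtain ⟨x, hx, y, hy, hex, hey⟩ := hwe e he
  have hxy : ¬(x ∈ S ↔ y ∈ S) := by
    have hne : x ≠ y := fun hxy => hy (hxy ▸ hx)
    rw [← h.mem_faceCut_iff hne hex hey, hS]
    exact he
  have hedges : {e | e ∈ w.edges} = faceCut B X := by
    refine Set.Subset.antisymm hwe ?_
    rintro e' ⟨x', hx', y', hy', hex', hey'⟩
    have hne : x' ≠ y' := fun hxy => hy' (hxy ▸ hx')
    rw [← hS, h.mem_faceCut_iff hne hex' hey',
      hSX x' hx' x hx, hSY y' hy' y hy]
    exact hxy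
  refine ⟨v, w, hw.isHamiltonianCycle_of_mem fun a => ?_, hedges⟩
  obtain ⟨b, hb⟩ : {b | s(a, b) ∈ faceCut B X}.Nonempty :=
    Set.nonempty_of_ncard_ne_zero (by rw [htwo]; decide)
  rw [← hedges] at hb
  exact w.fst_mem_support_of_mem_edges hb

theorem preconnected_induce_of_isHamiltonianCycle [DecidableEq V] (h : IsCubicSphere Γ B)
    (hG : ∀ f g, G.Adj f g ↔ f ≠ g ∧ (B f ∩ B g).Nonempty) {v : V} {w : Γ.Walk v v}
    (hw : w.IsHamiltonianCycle) (hX : faceCut B X = {e | e ∈ w.edges}) :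
    (G.induce X).Preconnected := by
  rintro ⟨a, ha⟩ ⟨b, hb⟩
  let A : Set F := {f | ∃ hf : f ∈ X, (G.induce X).Reachable ⟨a, ha⟩ ⟨f, hf⟩}
  have haA : a ∈ A := ⟨ha, .refl _⟩
  have hAX : A ⊆ X := fun f hf => hf.1
  have hclosed : ∀ f ∈ A, ∀ g ∈ X, f ≠ g → (B f ∩ B g).Nonempty → g ∈ A := by
    rintro f ⟨hf, hreach⟩ g hg hne hfg
    have hadj : (G.induce X).Adj ⟨f, hf⟩ ⟨g, hg⟩ := (hG f g).mpr ⟨hne, hfg⟩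
    exact ⟨hg, hreach.trans hadj.reachable⟩
  have hcut : faceCut B A ⊆ {e | e ∈ w.edges} := by
    rw [← hX]
    rintro e ⟨x, hx, y, hy, hex, hey⟩
    refine ⟨x, hAX hx, y, fun hyX => hy ?_, hex, hey⟩
    exact hclosed x hx y hyX (fun hxy => hy (hxy ▸ hx)) ⟨e, hex, hey⟩
  suffices hXA : X ⊆ A from (hXA hb).2
  rcases hw.eq_empty_or_eq_edges hcut (h.isEvenEdgeSet_faceCut A) with h0 | h1
  · rcases h.eq_empty_or_univ (X := A) fun f g e hf hg => by
      by_cases hne : f = g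
      · rw [hne]
      · have := h.mem_faceCut_iff (X := A) hne hf hg
        simp only [h0, Set.mem_empty_iff_false, false_iff, not_not] at this
        exact this with hA | hA
    · simp [hA] at haA
    · simp [hA]
  · rcases h.eq_empty_or_univ (X := {f | f ∈ A ↔ f ∈ X}) fun f g e hf hg => by
      by_cases hne : f = g
      · rw [hne]
      · have h₁ := h.mem_faceCut_iff (X := A) hne hf hg
        have h₂ := h.mem_faceCut_iff (X := X) hne hf hg
        rw [h1, ← hX, h₂] at h₁
        simp only [Set.mem_ofPred_eq]
        tauto with hA | hA
    · have : a ∈ {f | f ∈ A ↔ f ∈ X} := iff_of_true haA ha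
      simp [hA] at this
    · intro f hf
      have : f ∈ {f | f ∈ A ↔ f ∈ X} := hA ▸ Set.mem_univ f
      exact this.mpr hf

theorem card_edgeSet_induce_le (h : IsCubicSphere Γ B)
    (hG : ∀ f g, G.Adj f g ↔ f ≠ g ∧ (B f ∩ B g).Nonempty) (X : Set F) :
    Nat.card (G.induce X).edgeSet ≤ {e ∈ Γ.edgeSet | ∀ f, e ∈ B f → f ∈ X}.ncard := by
  have hex : ∀ s : (G.induce X).edgeSet, ∃ e ∈ Γ.edgeSet, ∀ f, e ∈ B f ↔ ∃ x ∈ s.1, x.1 = f := by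
    rintro ⟨s, hs⟩
    induction s with | h x y =>
    obtain ⟨hne, e, hex, hey⟩ := (hG x y).mp hs
    have he := h.boundary_subset _ hex
    refine ⟨e, he, fun f => ?_⟩
    obtain ⟨p, q, hpq, hB⟩ := h.two_faces e he
    rw [hB] at hex hey ⊢
    simp only [Sym2.mem_iff, exists_eq_or_imp, exists_eq_left]
    grind
  choose φ hφ hφB using hex
  rw [← Nat.card_coe_set_eq]
  refine Nat.card_le_card_of_injective
    (fun s => (⟨φ s, hφ s, fun f hf => ?_⟩ : {e ∈ Γ.edgeSet | ∀ f, e ∈ B f → f ∈ X})) ?_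
  · obtain ⟨x, -, rfl⟩ := (hφB s f).mp hf
    exact x.2
  · intro s t hst
    have hst : φ s = φ t := congrArg Subtype.val hst
    refine Subtype.ext (Sym2.ext fun x => ?_)
    have hs := hφB s x.1
    rw [hst, hφB t x.1] at hs
    simpa [Subtype.val_inj] using hs.symm

/-- The two sides of a Hamiltonian cycle are induced trees of the dual graph. -/
theorem isTree_induce_of_isHamiltonianCycle [DecidableEq V] (h : IsCubicSphere Γ B)
    (hG : ∀ f g, G.Adj f g ↔ f ≠ g ∧ (B f ∩ B g).Nonempty) {v : V} {w : Γ.Walk v v}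
    (hw : w.IsHamiltonianCycle) (hX : faceCut B X = {e | e ∈ w.edges}) :
    (G.induce X).IsTree ∧ (G.induce Xᶜ).IsTree := by
  have hXc : faceCut B Xᶜ = {e | e ∈ w.edges} := by
    rw [← hX]
    ext e
    constructor
    · rintro ⟨x, hx, y, hy, hex, hey⟩
      exact ⟨y, not_not.mp hy, x, hx, hey, hex⟩
    · rintro ⟨x, hx, y, hy, hex, hey⟩
      exact ⟨y, hy, x, not_not.mpr hx, hey, hex⟩
  obtain ⟨e, he⟩ : ∃ e, e ∈ w.edges := List.exists_mem_of_ne_nil _ (by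
    simpa using hw.isCycle.not_nil)
  have he : e ∈ faceCut B X := hX ▸ he
  obtain ⟨x, hx, y, hy, -, -⟩ := he
  have cX : (G.induce X).Connected :=
    { preconnected := h.preconnected_induce_of_isHamiltonianCycle hG hw hX
      nonempty := ⟨⟨x, hx⟩⟩ }
  have cY : (G.induce Xᶜ).Connected :=
    { preconnected := h.preconnected_induce_of_isHamiltonianCycle hG hw hXc
      nonempty := ⟨⟨y, hy⟩⟩ }
  have hwcard : (faceCut B X).ncard = Fintype.card V := by
    rw [hX, ← hw.length_eq, ← w.length_edges, ← List.toFinset_card_of_nodup hw.isCycle.edges_nodup,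
      ← Set.ncard_coe_finset]
    congr 1
    ext
    simp
  let EX : Set (Sym2 V) := {e ∈ Γ.edgeSet | ∀ f, e ∈ B f → f ∈ X}
  let EY : Set (Sym2 V) := {e ∈ Γ.edgeSet | ∀ f, e ∈ B f → f ∈ Xᶜ}
  have hXY : Disjoint EX EY := Set.disjoint_left.mpr fun e he he' => by
    obtain ⟨f, g, -, hB⟩ := h.two_faces e he.1
    have hf := (hB f).mpr (.inl rfl)
    exact he'.2 f hf (he.2 f hf)
  have hC : Disjoint (EX ∪ EY) (faceCut B X) := Set.disjoint_left.mpr fun e he hc => by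
    obtain ⟨x, hx, y, hy, hex, hey⟩ := hc
    rcases he with he | he
    · exact hy (he.2 y hey)
    · exact he.2 x hex hx
  have hle : ((EX ∪ EY) ∪ faceCut B X).ncard ≤ Γ.edgeSet.ncard :=
    Set.ncard_le_ncard (Set.union_subset (Set.union_subset (fun e he => he.1) fun e he => he.1)
      (h.faceCut_subset X)) (Set.toFinite _)
  rw [Set.ncard_union_eq hC (Set.toFinite _) (Set.toFinite _),
    Set.ncard_union_eq hXY (Set.toFinite _) (Set.toFinite _), hwcard] at hle
  have lX : Nat.card (G.induce X).edgeSet ≤ EX.ncard := h.card_edgeSet_induce_le hG X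
  have lY : Nat.card (G.induce Xᶜ).edgeSet ≤ EY.ncard := h.card_edgeSet_induce_le hG Xᶜ
  have vX := cX.card_vert_le_card_edgeSet_add_one
  have vY := cY.card_vert_le_card_edgeSet_add_one
  have hF : Nat.card X + Nat.card (Xᶜ : Set F) = Fintype.card F := by
    rw [Nat.card_coe_set_eq, Nat.card_coe_set_eq, Set.ncard_add_ncard_compl,
      Nat.card_eq_fintype_card]
  have := h.euler
  rw [SimpleGraph.isTree_iff_connected_and_card, SimpleGraph.isTree_iff_connected_and_card]
  exact ⟨⟨cX, by omega⟩, cY, by omega⟩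

end IsCubicSphere

theorem PlaneGraph.isCubicSphere {F : Type*} [Fintype F] (P : PlaneGraph V) (hCubic : P.Cubic)
    (hconn : P.G.Connected) (faceOf : F → Finset (Sym2 V)) (hInto : ∀ f : F, faceOf f ∈ P.faces)
    (hInj : Function.Injective faceOf) (hSurj : ∀ s ∈ P.faces, ∃ f : F, faceOf f = s) :
    IsCubicSphere P.G fun f => (faceOf f : Set (Sym2 V)) where
  connected := hconn
  cubic := hCubic
  boundary_subset f := by
    obtain ⟨v, c, -, hc⟩ := P.face_cycle (faceOf f) (hInto f)
    rw [← hc]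
    exact fun e he => c.edges_subset_edgeSet (by simpa using he)
  boundary_nonempty f := by
    obtain ⟨v, c, hcyc, hc⟩ := P.face_cycle (faceOf f) (hInto f)
    obtain ⟨e, he⟩ : ∃ e, e ∈ c.edges := List.exists_mem_of_ne_nil _ (by simpa using hcyc.not_nil)
    exact ⟨e, by simpa [← hc] using he⟩
  boundary_degree f v := by
    obtain ⟨u, c, hcyc, hc⟩ := P.face_cycle (faceOf f) (hInto f)
    simpa [← hc] using hcyc.ncard_edges_at v
  two_faces e he := by
    obtain ⟨s, t, hst, h⟩ := Finset.card_eq_two.mp (P.edge_two_faces e he)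
    have hmem : ∀ u, u ∈ P.faces ∧ e ∈ u ↔ u = s ∨ u = t := fun u => by
      simpa using Finset.ext_iff.mp h u
    obtain ⟨f, rfl⟩ := hSurj s ((hmem s).mpr (.inl rfl)).1
    obtain ⟨g, rfl⟩ := hSurj t ((hmem t).mpr (.inr rfl)).1
    refine ⟨f, g, fun hfg => hst (hfg ▸ rfl), fun k => ?_⟩
    simpa [hInto, hInj.eq_iff] using hmem (faceOf k)
  euler := by
    classical
    have himage : Finset.univ.image faceOf = P.faces := by
      ext s
      simp only [Finset.mem_image, Finset.mem_univ, true_and]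
      exact ⟨fun ⟨f, hf⟩ => hf ▸ hInto f, hSurj s⟩
    have hcard : Fintype.card F = P.faces.card := by
      rw [← himage, Finset.card_image_of_injective _ hInj, Finset.card_univ]
    have := P.euler
    omega

theorem PlaneGraph.ThreeConnected.connected {P : PlaneGraph V} (h3 : P.ThreeConnected) :
    P.G.Connected := by
  have h := h3.2 ∅ (by simp)
  rw [Set.compl_empty] at h
  exact P.G.induceUnivIso.connected_iff.mp h

/-- Stein's theorem: a cubic 3-connected bipartite plane graph `P` is hamiltonian
iff its dual `G = P*` has two disjoint induced trees covering all its vertices;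
moreover, for such trees `X, Y`, the edges of `P` dual to the `X–Y` edges of `G`
form the edge set of a Hamilton cycle of `P`. -/
theorem stmt10 {F : Type*} [Fintype F] (P : PlaneGraph V)
    (hCubic : P.Cubic) (hBip : P.Bipartite) (h3 : P.ThreeConnected)
    (G : SimpleGraph F) (faceOf : F → Finset (Sym2 V))
    (hInto : ∀ f : F, faceOf f ∈ P.faces)
    (hInj : Function.Injective faceOf)
    (hSurj : ∀ s ∈ P.faces, ∃ f : F, faceOf f = s)
    (hDualAdj : ∀ f g : F, G.Adj f g ↔ f ≠ g ∧ ∃ e, e ∈ faceOf f ∧ e ∈ faceOf g) :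
    ((∃ (v : V) (w : P.G.Walk v v), w.IsHamiltonianCycle) ↔
      ∃ X Y : Set F, Disjoint X Y ∧ (G.induce X).IsTree ∧ (G.induce Y).IsTree ∧
        X ∪ Y = Set.univ) ∧
    (∀ X Y : Set F, Disjoint X Y → (G.induce X).IsTree → (G.induce Y).IsTree →
      X ∪ Y = Set.univ →
      ∃ (v : V) (w : P.G.Walk v v), w.IsHamiltonianCycle ∧
        {e | e ∈ w.edges} =
          {e : Sym2 V | ∃ x ∈ X, ∃ y ∈ Y, e ∈ faceOf x ∧ e ∈ faceOf y}) := by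
  have h := P.isCubicSphere hCubic h3.connected faceOf hInto hInj hSurj
  have htree : ∀ X Y : Set F, Disjoint X Y → (G.induce X).IsTree → (G.induce Y).IsTree →
      X ∪ Y = Set.univ →
      ∃ (v : V) (w : P.G.Walk v v), w.IsHamiltonianCycle ∧
        {e | e ∈ w.edges} =
          {e : Sym2 V | ∃ x ∈ X, ∃ y ∈ Y, e ∈ faceOf x ∧ e ∈ faceOf y} := by
    intro X Y hXY hX hY hunion
    obtain rfl : Xᶜ = Y := (isCompl_iff.mpr ⟨hXY, codisjoint_iff.mpr hunion⟩).compl_eq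
    exact h.exists_isHamiltonianCycle_edges_eq hDualAdj hX hY
  refine ⟨⟨?_, fun ⟨X, Y, hXY, hX, hY, hunion⟩ => ?_⟩, htree⟩
  · rintro ⟨v, w, hw⟩
    obtain ⟨X, hX⟩ := h.exists_faceCut_eq (D := {e | e ∈ w.edges})
      (fun e he => w.edges_subset_edgeSet he) hw.isCycle.isEvenEdgeSet
    obtain ⟨tX, tY⟩ := h.isTree_induce_of_isHamiltonianCycle hDualAdj hw hX
    exact ⟨X, Xᶜ, disjoint_compl_right, tX, tY, Set.union_compl_self X⟩
  · obtain ⟨v, w, hw, -⟩ := htree X Y hXY hX hY hunion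
    exact ⟨v, w, hw⟩
end

section
/- Let P be a cubic 3-connected bipartite plane graph which has a 2-factor consisting only of facial 4-cycles, and let P* be its dual. Then P has at least 3^(2|P*|/Δ(P*)²) different Hamilton cycles. -/
variable {V : Type*} [Fintype V] [DecidableEq V]

namespace PlaneGraph

open SimpleGraph Finset

open scoped Classical in
theorem _root_.SimpleGraph.Walk.IsCycle.card_edges_filter_mem {W : Type*} [DecidableEq W]
    {G : SimpleGraph W} {u v : W}
    {c : G.Walk u u} (hc : c.IsCycle) (hv : v ∈ c.support) :
    (c.edges.toFinset.filter (v ∈ ·)).card = 2 := by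
  have h := hc.ncard_neighborSet_toSubgraph_eq_two hv
  rw [← h, ← Set.ncard_coe_finset]
  symm
  refine Set.ncard_congr (fun w _ => s(v, w)) ?_ ?_ ?_
  · intro w hw
    have : s(v, w) ∈ c.edges := by rwa [← Walk.mem_edges_toSubgraph]
    simpa using this
  · intro a b _ _ hab
    exact Sym2.congr_right.mp hab
  · intro e he
    simp only [coe_filter, List.mem_toFinset, Set.mem_ofPred_eq] at he
    obtain ⟨he, w, rfl⟩ := he
    refine ⟨w, ?_, rfl⟩
    rwa [← Walk.mem_edges_toSubgraph] at he

/-- Every vertex of a cycle has, besides any prescribed vertex, another neighbour on the cycle. -/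
theorem _root_.SimpleGraph.Walk.IsCycle.exists_mem_edges_ne {W : Type*} [DecidableEq W]
    {G : SimpleGraph W} {u v : W}
    {c : G.Walk u u} (hc : c.IsCycle) (hv : v ∈ c.support) (a : W) :
    ∃ w ≠ a, s(v, w) ∈ c.edges := by
  have h := hc.ncard_neighborSet_toSubgraph_eq_two hv
  obtain ⟨w, hw, hwa⟩ := Set.exists_ne_of_one_lt_ncard (h ▸ one_lt_two) a
  exact ⟨w, hwa, by rwa [← Walk.mem_edges_toSubgraph]⟩

/-- The vertex `v` lies on the edge set `f`. -/
def OnFace (f : Finset (Sym2 V)) (v : V) : Prop := ∃ e ∈ f, v ∈ e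

variable {P : PlaneGraph V} {f g : Finset (Sym2 V)} {v : V} {e : Sym2 V}

open scoped Classical in
theorem card_filter_mem_of_mem_face (hf : f ∈ P.faces) (hv : OnFace f v) :
    (f.filter (v ∈ ·)).card = 2 := by
  obtain ⟨u, c, hc, rfl⟩ := P.face_cycle f hf
  obtain ⟨e, he, hve⟩ := hv
  refine Eq.trans (by congr!) (hc.card_edges_filter_mem (v := v) ?_)
  exact c.mem_support_of_mem_edges (by simpa using he) hve

theorem mem_edgeSet_of_mem_face (hf : f ∈ P.faces) (he : e ∈ f) : e ∈ P.G.edgeSet := by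
  obtain ⟨u, c, hc, rfl⟩ := P.face_cycle f hf
  exact c.edges_subset_edgeSet (by simpa using he)

theorem exists_onFace (hf : f ∈ P.faces) : ∃ v, OnFace f v := by
  obtain ⟨u, c, hc, rfl⟩ := P.face_cycle f hf
  obtain ⟨e, he, hu⟩ := (Walk.mem_support_iff_exists_mem_edges_of_not_nil hc.not_nil).1
    c.start_mem_support
  exact ⟨u, e, by simpa using he, hu⟩

open scoped Classical in
/-- The number of vertices on a face is its number of edges. -/
theorem card_filter_onFace (hf : f ∈ P.faces) : (univ.filter (OnFace f)).card = f.card := by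
  obtain ⟨u, c, hc, rfl⟩ := P.face_cycle f hf
  rw [List.toFinset_card_of_nodup hc.edges_nodup, Walk.length_edges]
  have h : univ.filter (OnFace c.edges.toFinset) = c.support.tail.toFinset := by
    ext v
    have h1 : v ∈ c.support.tail ↔ v ∈ c.support := by
      rw [Walk.mem_support_iff]
      refine ⟨Or.inr, ?_⟩
      rintro (rfl | h)
      · exact Walk.end_mem_tail_support hc.not_nil
      · exact h
    simp only [mem_filter, mem_univ, true_and, List.mem_toFinset]
    rw [h1, Walk.mem_support_iff_exists_mem_edges_of_not_nil hc.not_nil]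
    simp [OnFace]
  rw [h, List.toFinset_card_of_nodup hc.support_nodup]
  simp

open scoped Classical in
/-- The edges at the vertex `v`. -/
noncomputable def edgesAt (P : PlaneGraph V) (v : V) : Finset (Sym2 V) :=
  univ.filter fun e => e ∈ P.G.edgeSet ∧ v ∈ e

theorem mem_edgesAt : e ∈ P.edgesAt v ↔ e ∈ P.G.edgeSet ∧ v ∈ e := by simp [edgesAt]

theorem Cubic.card_edgesAt (h : P.Cubic) (v : V) : (P.edgesAt v).card = 3 := by
  rw [← h v, ← Set.ncard_coe_finset]
  symm
  refine Set.ncard_congr (fun w _ => s(v, w)) ?_ ?_ ?_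
  · intro w hw
    simpa [mem_edgesAt] using hw
  · intro a b _ _ hab
    exact Sym2.congr_right.mp hab
  · intro e he
    rw [mem_coe, mem_edgesAt] at he
    obtain ⟨he, w, rfl⟩ := he
    exact ⟨w, he, rfl⟩

theorem card_edgesAt_filter_mem_face (hf : f ∈ P.faces) (hv : OnFace f v) :
    ((P.edgesAt v).filter (· ∈ f)).card = 2 := by
  classical
  rw [← card_filter_mem_of_mem_face hf hv]
  congr 1
  ext e
  simp only [mem_filter, mem_edgesAt]
  exact ⟨fun h => ⟨h.2, h.1.2⟩, fun h => ⟨⟨mem_edgeSet_of_mem_face hf h.1, h.2⟩, h.1⟩⟩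

/-- Two faces at a vertex of a cubic plane graph share an edge at this vertex. -/
theorem Cubic.exists_common_edge (h : P.Cubic) (hf : f ∈ P.faces) (hg : g ∈ P.faces)
    (hfv : OnFace f v) (hgv : OnFace g v) : ∃ e ∈ P.edgesAt v, e ∈ f ∧ e ∈ g := by
  have h1 := card_edgesAt_filter_mem_face hf hfv
  have h2 := card_edgesAt_filter_mem_face hg hgv
  have h3 := h.card_edgesAt v
  by_contra! hc
  have hd : Disjoint ((P.edgesAt v).filter (· ∈ f)) ((P.edgesAt v).filter (· ∈ g)) := by
    rw [Finset.disjoint_left]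
    intro e he he'
    simp only [mem_filter] at he he'
    exact hc e he.1 he.2 he'.2
  have h4 := card_union_of_disjoint hd
  have h5 := card_le_card (union_subset (filter_subset (· ∈ f) (P.edgesAt v))
    (filter_subset (· ∈ g) (P.edgesAt v)))
  omega

open scoped Classical in
theorem Cubic.card_faces_at (h : P.Cubic) (v : V) :
    (P.faces.filter (OnFace · v)).card = 3 := by
  have h1 := sum_card_bipartiteAbove_eq_sum_card_bipartiteBelow (s := P.edgesAt v)
    (t := P.faces.filter (OnFace · v)) (fun e f => e ∈ f)
  have h2 : ∀ e ∈ P.edgesAt v,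
      (bipartiteAbove (fun e f => e ∈ f) (P.faces.filter (OnFace · v)) e).card = 2 := by
    intro e he
    rw [mem_edgesAt] at he
    rw [← P.edge_two_faces e he.1]
    congr 1
    ext f
    simp only [mem_bipartiteAbove, mem_filter]
    exact ⟨fun h => ⟨h.1.1, h.2⟩, fun h => ⟨⟨h.1, e, h.2, he.2⟩, h.2⟩⟩
  have h3 : ∀ f ∈ P.faces.filter (OnFace · v),
      (bipartiteBelow (fun e f => e ∈ f) (P.edgesAt v) f).card = 2 := by
    intro f hf
    rw [mem_filter] at hf
    rw [← card_edgesAt_filter_mem_face hf.1 hf.2]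
    rfl
  rw [sum_congr rfl h2, sum_congr rfl h3, sum_const, sum_const, h.card_edgesAt] at h1
  simp only [smul_eq_mul] at h1
  omega

theorem ThreeConnected.connected_s12 (h : P.ThreeConnected) : P.G.Connected := by
  have h0 : Nonempty V := Fintype.card_pos_iff.1 (by have := h.1; omega)
  have h1 := (h.2 ∅ (by simp)).preconnected
  refine ⟨fun a b => ?_⟩
  exact (h1 ⟨a, by simp⟩ ⟨b, by simp⟩).map (SimpleGraph.Embedding.induce _).toHom

theorem _root_.SimpleGraph.Connected.eq_of_adj {W : Type*} {G : SimpleGraph W}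
    (h : G.Connected) {α : Type*} (x : W → α) (hx : ∀ u v, G.Adj u v → x u = x v) (u v : W) :
    x u = x v := by
  obtain ⟨w⟩ := h.preconnected u v
  induction w with
  | nil => rfl
  | cons hadj _ ih => exact (hx _ _ hadj).trans ih

theorem _root_.LinearMap.finrank_range_add_one_ge {K α U : Type*} [Field K] [Fintype α]
    [AddCommGroup U] [Module K U] (T : (α → K) →ₗ[K] U)
    (hT : ∀ x, T x = 0 → ∀ i j, x i = x j) :
    Fintype.card α ≤ Module.finrank K (LinearMap.range T) + 1 := by
  have h1 := T.finrank_range_add_finrank_ker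
  rw [Module.finrank_fintype_fun_eq_card] at h1
  have h2 : LinearMap.ker T ≤ Submodule.span K {fun _ => (1 : K)} := by
    intro x hx
    rw [LinearMap.mem_ker] at hx
    rw [Submodule.mem_span_singleton]
    rcases isEmpty_or_nonempty α with hα | ⟨⟨i⟩⟩
    · exact ⟨0, Subsingleton.elim _ _⟩
    · exact ⟨x i, funext fun j => by simpa using hT x hx i j⟩
  have h3 := (Submodule.finrank_mono h2).trans
    (finrank_span_le_card ({fun _ => (1 : K)} : Set (α → K)))
  simp only [Set.toFinset_singleton, card_singleton] at h3
  omega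

/-- A complex `Kᵞ → Kᵝ → Kᵅ` of Euler characteristic two whose outer homologies consist of
constant functions is exact in the middle. -/
theorem _root_.Matrix.exists_mulVec_eq_of_card {K α β γ : Type*} [Field K] [Fintype α] [Fintype β]
    [Fintype γ] (M : Matrix α β K) (N : Matrix β γ K) (hMN : M * N = 0)
    (hN : ∀ x, N.mulVec x = 0 → ∀ i j, x i = x j)
    (hM : ∀ y, M.transpose.mulVec y = 0 → ∀ i j, y i = y j)
    (hcard : Fintype.card β + 2 = Fintype.card α + Fintype.card γ)
    (z : β → K) (hz : M.mulVec z = 0) : ∃ x, N.mulVec x = z := by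
  classical
  have h1 := LinearMap.finrank_range_add_one_ge N.mulVecLin hN
  have h2 := LinearMap.finrank_range_add_one_ge M.transpose.mulVecLin hM
  have h3 : Module.finrank K (LinearMap.range M.transpose.mulVecLin) =
      Module.finrank K (LinearMap.range M.mulVecLin) := M.rank_transpose
  have h4 := M.mulVecLin.finrank_range_add_finrank_ker
  rw [Module.finrank_fintype_fun_eq_card] at h4
  have h5 : LinearMap.range N.mulVecLin ≤ LinearMap.ker M.mulVecLin := by
    rintro _ ⟨x, rfl⟩
    simp [hMN]
  have h6 := Submodule.eq_of_le_of_finrank_le h5 (by omega)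
  have h7 : z ∈ LinearMap.ker M.mulVecLin := by simpa using hz
  rw [← h6] at h7
  obtain ⟨x, hx⟩ := h7
  exact ⟨x, hx⟩

open scoped Classical in
/-- The face-edge incidence matrix modulo two. -/
noncomputable def faceMatrix (P : PlaneGraph V) : Matrix P.faces P.G.edgeSet (ZMod 2) :=
  fun f e => if e.1 ∈ f.1 then 1 else 0

open scoped Classical in
/-- The edge-vertex incidence matrix modulo two. -/
noncomputable def edgeMatrix (P : PlaneGraph V) : Matrix P.G.edgeSet V (ZMod 2) :=
  fun e v => if v ∈ e.1 then 1 else 0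

theorem edgeMatrix_mulVec [Fintype P.G.edgeSet] (x : V → ZMod 2) {u v : V} (h : P.G.Adj u v) :
    P.edgeMatrix.mulVec x ⟨s(u, v), h⟩ = x u + x v := by
  classical
  have : (univ.filter fun w => w ∈ s(u, v)) = {u, v} := by ext; simp
  simp only [Matrix.mulVec, dotProduct, edgeMatrix, ite_mul, one_mul, zero_mul]
  rw [← sum_filter, this, sum_pair h.ne]

theorem exists_two_faces (he : e ∈ P.G.edgeSet) :
    ∃ f g, f ≠ g ∧ P.faces.filter (fun f => e ∈ f) = {f, g} :=
  card_eq_two.1 (P.edge_two_faces e he)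

theorem faceMatrix_transpose_mulVec (y : P.faces → ZMod 2) {f g : P.faces}
    (hfg : f ≠ g) (he : e ∈ P.G.edgeSet) (hf : e ∈ f.1) (hg : e ∈ g.1) :
    P.faceMatrix.transpose.mulVec y ⟨e, he⟩ = y f + y g := by
  classical
  have h2 : ({f.1, g.1} : Finset _) = P.faces.filter (fun f => e ∈ f) := by
    refine eq_of_subset_of_card_le ?_ ?_
    · intro x hx
      simp only [mem_insert, mem_singleton] at hx
      rcases hx with rfl | rfl <;> simp [*]
    · rw [P.edge_two_faces e he, card_pair fun h => hfg (Subtype.ext h)]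
  have h3 : (univ.filter fun h : P.faces => e ∈ h.1) = {f, g} := by
    ext h
    have := congrArg (h.1 ∈ ·) h2
    simp only [mem_insert, mem_singleton, mem_filter, h.2, true_and, eq_iff_iff] at this
    simp only [mem_filter, mem_univ, true_and, mem_insert, mem_singleton]
    rw [Subtype.ext_iff, Subtype.ext_iff]
    exact this.symm
  simp only [Matrix.mulVec, dotProduct, faceMatrix, ite_mul, one_mul, zero_mul,
    Matrix.transpose_apply]
  rw [← sum_filter, h3, sum_pair hfg]

theorem faceMatrix_mul_edgeMatrix [Fintype P.G.edgeSet] : P.faceMatrix * P.edgeMatrix = 0 := by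
  classical
  ext f v
  simp only [Matrix.mul_apply, faceMatrix, edgeMatrix, mul_ite, mul_one, mul_zero,
    Matrix.zero_apply, ← ite_and]
  rw [sum_boole]
  have h1 : (univ.filter fun e : P.G.edgeSet => v ∈ e.1 ∧ e.1 ∈ f.1).card =
      (f.1.filter (v ∈ ·)).card := by
    rw [← card_map (Function.Embedding.subtype _)]
    congr 1
    ext e
    simp only [mem_map, mem_filter, mem_univ, true_and, Function.Embedding.subtype_apply]
    constructor
    · rintro ⟨a, h, rfl⟩
      exact h.symm
    · intro h
      exact ⟨⟨e, mem_edgeSet_of_mem_face f.2 h.1⟩, h.symm, rfl⟩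
  rw [h1]
  by_cases hv : OnFace f.1 v
  · rw [card_filter_mem_of_mem_face f.2 hv]
    rfl
  · rw [card_eq_zero.2, Nat.cast_zero]
    rw [filter_eq_empty_iff]
    exact fun e he hve => hv ⟨e, he, hve⟩

theorem eq_of_edgeMatrix_mulVec_eq_zero [Fintype P.G.edgeSet] (hP : P.G.Connected)
    (x : V → ZMod 2) (hx : P.edgeMatrix.mulVec x = 0) (u v : V) : x u = x v := by
  refine hP.eq_of_adj x (fun u v h => ?_) u v
  have := congrFun hx ⟨s(u, v), h⟩
  rw [edgeMatrix_mulVec x h] at this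
  exact CharTwo.add_eq_zero.1 this

theorem Cubic.eq_of_faceMatrix_transpose_mulVec_eq_zero (h : P.Cubic) (hP : P.G.Connected)
    (y : P.faces → ZMod 2) (hy : P.faceMatrix.transpose.mulVec y = 0) (f g : P.faces) :
    y f = y g := by
  have h1 : ∀ (v : V) (f g : P.faces), OnFace f.1 v → OnFace g.1 v → y f = y g := by
    intro v f g hf hg
    by_cases hfg : f = g
    · rw [hfg]
    obtain ⟨e, he, hef, heg⟩ := h.exists_common_edge f.2 g.2 hf hg
    have := congrFun hy ⟨e, (mem_edgesAt.1 he).1⟩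
    rw [faceMatrix_transpose_mulVec y hfg _ hef heg] at this
    exact CharTwo.add_eq_zero.1 this
  have h2 : ∀ v, ∃ f : P.faces, OnFace f.1 v := by
    classical
    intro v
    obtain ⟨f, hf⟩ := card_pos.1 (by rw [h.card_faces_at v]; norm_num)
    rw [mem_filter] at hf
    exact ⟨⟨f, hf.1⟩, hf.2⟩
  choose F hF using h2
  obtain ⟨u, hu⟩ := exists_onFace f.2
  obtain ⟨v, hv⟩ := exists_onFace g.2
  rw [h1 u f (F u) hu (hF u), h1 v g (F v) hv (hF v)]
  refine hP.eq_of_adj (fun v => y (F v)) (fun u v huv => ?_) u v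
  obtain ⟨f, g, -, hfg⟩ := exists_two_faces (P := P) (e := s(u, v)) huv
  have hf : f ∈ P.faces.filter (fun f => s(u, v) ∈ f) := by simp [hfg]
  rw [mem_filter] at hf
  exact (h1 u (F u) ⟨f, hf.1⟩ (hF u) ⟨_, hf.2, by simp⟩).trans
    (h1 v ⟨f, hf.1⟩ (F v) ⟨_, hf.2, by simp⟩ (hF v))

theorem card_edges_add_two [Fintype P.G.edgeSet] :
    Fintype.card P.G.edgeSet + 2 = Fintype.card P.faces + Fintype.card V := by
  have h1 := P.euler
  rw [Set.ncard_eq_toFinset_card', Set.toFinset_card] at h1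
  rw [Fintype.card_coe]
  omega

/-- An edge set meeting every face evenly is a cut. -/
theorem Cubic.exists_edgeMatrix_mulVec_eq [Fintype P.G.edgeSet] (h : P.Cubic)
    (hP : P.G.Connected) (z : P.G.edgeSet → ZMod 2) (hz : P.faceMatrix.mulVec z = 0) :
    ∃ x, P.edgeMatrix.mulVec x = z :=
  Matrix.exists_mulVec_eq_of_card _ _ faceMatrix_mul_edgeMatrix
    (eq_of_edgeMatrix_mulVec_eq_zero hP) (h.eq_of_faceMatrix_transpose_mulVec_eq_zero hP)
    card_edges_add_two z hz

/-- An edge set of even degrees is a sum of faces. -/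
theorem Cubic.exists_faceMatrix_transpose_mulVec_eq [Fintype P.G.edgeSet] (h : P.Cubic)
    (hP : P.G.Connected) (z : P.G.edgeSet → ZMod 2)
    (hz : P.edgeMatrix.transpose.mulVec z = 0) :
    ∃ y, P.faceMatrix.transpose.mulVec y = z :=
  Matrix.exists_mulVec_eq_of_card _ _
    (by rw [← Matrix.transpose_mul, faceMatrix_mul_edgeMatrix, Matrix.transpose_zero])
    (h.eq_of_faceMatrix_transpose_mulVec_eq_zero hP)
    (by simpa using eq_of_edgeMatrix_mulVec_eq_zero hP)
    (by rw [card_edges_add_two, add_comm]) z hz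

/-- A face of length four has a perfect matching. -/
theorem exists_matching_of_card_eq_four (hf : f ∈ P.faces) (h4 : f.card = 4) :
    ∃ N ⊆ f, ∀ v, OnFace f v → ∃! e, e ∈ N ∧ v ∈ e := by
  obtain ⟨u, c, hc, rfl⟩ := P.face_cycle f hf
  rw [List.toFinset_card_of_nodup hc.edges_nodup, Walk.length_edges] at h4
  match c, h4, hc with
  | .cons (v := b) h1 (.cons (v := x) h2 (.cons (v := d) h3 (.cons h4 .nil))), _, hc =>
    have hn := hc.support_nodup
    simp only [Walk.support_cons, Walk.support_nil, List.tail_cons, List.nodup_cons,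
      List.mem_cons, List.not_mem_nil, or_false, not_or] at hn
    refine ⟨{s(u, b), s(x, d)}, ?_, ?_⟩
    · intro e he
      simp only [mem_insert, mem_singleton] at he
      rcases he with rfl | rfl <;> simp
    · rintro v ⟨e, he, hv⟩
      have hv' : (v = u ∨ v = b) ∨ (v = x ∨ v = d) := by
        simp only [Walk.edges_cons, Walk.edges_nil, List.mem_toFinset, List.mem_cons,
          List.not_mem_nil, or_false] at he
        rcases he with rfl | rfl | rfl | rfl <;> rw [Sym2.mem_iff] at hv <;> tauto
      rcases hv' with hv' | hv'
      · refine ⟨s(u, b), by simp [hv'], ?_⟩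
        simp only [mem_insert, mem_singleton]
        rintro e ⟨rfl | rfl, he⟩
        · rfl
        · rw [Sym2.mem_iff] at he
          grind
      · refine ⟨s(x, d), by simp [hv'], ?_⟩
        simp only [mem_insert, mem_singleton]
        rintro e ⟨rfl | rfl, he⟩
        · rw [Sym2.mem_iff] at he
          grind
        · rfl

/-- A colouring of the faces for which every vertex is on exactly one face of each colour. -/
def IsFaceColoring (P : PlaneGraph V) (col : Finset (Sym2 V) → Fin 3) : Prop :=
  ∀ v i, ∃! f, f ∈ P.faces ∧ OnFace f v ∧ col f = i

theorem Cubic.exists_isFaceColoring (h : P.Cubic) (hP : P.G.Connected)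
    (h2F : P.HasFacialSquareTwoFactor) :
    ∃ col, P.IsFaceColoring col ∧ ∀ f ∈ P.faces, col f = 2 → f.card = 4 := by
  classical
  obtain ⟨F, hF, hF4, hFv⟩ := h2F
  choose! N hNf hN using fun f (hf : f ∈ F) =>
    exists_matching_of_card_eq_four (hF hf) (hF4 f hf)
  choose sq hsq hsq' using hFv
  simp only at hsq hsq'
  have hz : ∀ v, ∑ e ∈ P.edgesAt v,
      (if ∃ f ∈ F, e ∈ f ∧ e ∉ N f then 0 else 1 : ZMod 2) = 0 := by
    intro v
    obtain ⟨n, hn, hn'⟩ := hN (sq v) (hsq v).1 v (hsq v).2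
    have h1 : (P.edgesAt v).filter (fun e => ∃ f ∈ F, e ∈ f ∧ e ∉ N f) =
        ((P.edgesAt v).filter (· ∈ sq v)).erase n := by
      ext e
      simp only [mem_filter, mem_erase, mem_edgesAt]
      constructor
      · rintro ⟨⟨he, hve⟩, f, hf, hef, heN⟩
        obtain rfl := hsq' v f ⟨hf, e, hef, hve⟩
        refine ⟨?_, ⟨he, hve⟩, hef⟩
        rintro rfl
        exact heN hn.1
      · rintro ⟨hne, ⟨he, hve⟩, hes⟩
        exact ⟨⟨he, hve⟩, sq v, (hsq v).1, hes, fun heN => hne (hn' e ⟨heN, hve⟩)⟩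
    have h2 := card_erase_of_mem (s := (P.edgesAt v).filter (· ∈ sq v)) (a := n) (by
      have := hNf _ (hsq v).1 hn.1
      simp [mem_edgesAt, this, mem_edgeSet_of_mem_face (hF (hsq v).1) this, hn.2])
    rw [← h1, card_edgesAt_filter_mem_face (hF (hsq v).1) (hsq v).2] at h2
    have h3 := card_filter_add_card_filter_not (s := P.edgesAt v)
      (fun e => ∃ f ∈ F, e ∈ f ∧ e ∉ N f)
    rw [h.card_edgesAt, h2] at h3
    rw [sum_ite, sum_const_zero, zero_add, sum_const, nsmul_one]
    rw [show ((P.edgesAt v).filter fun e => ¬ ∃ f ∈ F, e ∈ f ∧ e ∉ N f).card = 2 by omega]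
    rfl
  obtain ⟨y, hy⟩ := h.exists_faceMatrix_transpose_mulVec_eq hP
    (fun e => if ∃ f ∈ F, e.1 ∈ f ∧ e.1 ∉ N f then 0 else 1) (by
      ext v
      refine Eq.trans ?_ (hz v)
      simp only [Matrix.mulVec, dotProduct, edgeMatrix, Matrix.transpose_apply, ite_mul, one_mul,
        zero_mul]
      rw [← sum_filter]
      refine sum_bij (fun e _ => e.1) ?_ ?_ ?_ ?_
      · intro e he
        rw [mem_filter] at he
        exact mem_edgesAt.2 ⟨e.2, he.2⟩
      · intro a _ b _ hab
        exact Subtype.ext hab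
      · intro e he
        rw [mem_edgesAt] at he
        exact ⟨⟨e, he.1⟩, by simpa using he.2, rfl⟩
      · intro e _
        rfl)
  let S : Finset (Sym2 V) → ZMod 2 := fun f => if hf : f ∈ P.faces then y ⟨f, hf⟩ else 0
  let col : Finset (Sym2 V) → Fin 3 := fun f => if f ∈ F then 2 else if S f = 1 then 1 else 0
  have hcol2 : ∀ f, col f = 2 ↔ f ∈ F := by
    intro f
    by_cases hf : f ∈ F
    · simp [col, hf]
    · by_cases hS : S f = 1 <;> simp [col, hf, hS]
  -- distinct faces at a vertex have distinct colours
  have hinj : ∀ v, Set.InjOn col (P.faces.filter (OnFace · v)) := by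
    intro v f hf g hg hfg
    rw [mem_coe, mem_filter] at hf hg
    by_contra hne
    have hFF : f ∉ F := by
      intro hfF
      have hgF := (hcol2 g).1 (hfg ▸ (hcol2 f).2 hfF)
      exact hne ((hsq' v f ⟨hfF, hf.2⟩).trans (hsq' v g ⟨hgF, hg.2⟩).symm)
    have hgF : g ∉ F := fun hgF => hFF ((hcol2 f).1 (hfg ▸ (hcol2 g).2 hgF))
    obtain ⟨e, he, hef, heg⟩ := h.exists_common_edge hf.1 hg.1 hf.2 hg.2
    rw [mem_edgesAt] at he
    have h1 := congrFun hy ⟨e, he.1⟩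
    rw [faceMatrix_transpose_mulVec y (f := ⟨f, hf.1⟩) (g := ⟨g, hg.1⟩)
      (fun h => hne (congrArg Subtype.val h)) he.1 hef heg, if_neg] at h1
    · have hSf : S f = y ⟨f, hf.1⟩ := by simp [S, hf.1]
      have hSg : S g = y ⟨g, hg.1⟩ := by simp [S, hg.1]
      rw [← hSf, ← hSg] at h1
      simp only [col, hFF, hgF, if_false] at hfg
      generalize S f = a at h1 hfg
      generalize S g = b at h1 hfg
      revert a b
      decide
    · rintro ⟨q, hq, heq, -⟩
      have h2 : ({f, g, q} : Finset _) ⊆ P.faces.filter (fun f => e ∈ f) := by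
        intro x hx
        simp only [mem_insert, mem_singleton] at hx
        rcases hx with rfl | rfl | rfl
        · simp [hf.1, hef]
        · simp [hg.1, heg]
        · simp [hF hq, heq]
      have h3 := card_le_card h2
      rw [P.edge_two_faces e he.1, card_eq_three.2 ⟨f, g, q, hne, fun h => hFF (h ▸ hq),
        fun h => hgF (h ▸ hq), rfl⟩] at h3
      omega
  refine ⟨col, fun v i => ?_, fun f hf h2 => hF4 f ((hcol2 f).1 h2)⟩
  have himg : (P.faces.filter (OnFace · v)).image col = univ := by
    rw [← card_eq_iff_eq_univ, card_image_of_injOn (hinj v), h.card_faces_at]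
    rfl
  have hi := mem_univ i
  rw [← himg, mem_image] at hi
  obtain ⟨f, hf, rfl⟩ := hi
  refine ⟨f, ⟨(mem_filter.1 hf).1, (mem_filter.1 hf).2, rfl⟩, fun g hg => ?_⟩
  exact hinj v (by simp [hg.1, hg.2.1]) hf hg.2.2

/-- The incidences of a cubic graph embedded in a surface with properly 3-coloured faces:
`face i v` is the face of colour `i` at `v`, and `nbr i v` is the neighbour of `v` along the edge
that is not on `face i v`. -/
structure FaceSystem (G : SimpleGraph V) where
  face : Fin 3 → V → Finset (Sym2 V)
  nbr : Fin 3 → V → V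
  adj_iff : ∀ u v, G.Adj u v ↔ ∃ i, v = nbr i u
  nbr_injective : ∀ v, Function.Injective (nbr · v)
  nbr_nbr : ∀ i v, nbr i (nbr i v) = v
  face_nbr : ∀ i j v, i ≠ j → face j (nbr i v) = face j v
  exists_cycle : ∀ i v, ∃ c : G.Walk v v, c.IsCycle ∧
    (∀ u, u ∈ c.support ↔ face i u = face i v) ∧ ∀ u w, s(u, w) ∈ c.edges → w ≠ nbr i u

theorem IsFaceColoring.exists_faceSystem {col : Finset (Sym2 V) → Fin 3}
    (hcol : P.IsFaceColoring col) (h : P.Cubic) :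
    ∃ S : FaceSystem P.G,
      (∀ i v, S.face i v ∈ P.faces ∧ OnFace (S.face i v) v ∧ col (S.face i v) = i) ∧
      (∀ f ∈ P.faces, ∀ v, OnFace f v → f = S.face (col f) v) ∧
      ∀ i v e, e ∈ P.edgesAt v → (e ∈ S.face i v ↔ e ≠ s(v, S.nbr i v)) := by
  classical
  choose φ hφ hφ' using hcol
  simp only [and_imp] at hφ hφ'
  have hφ'' : ∀ f ∈ P.faces, ∀ v, OnFace f v → f = φ v (col f) :=
    fun f hf v hv => hφ' v (col f) f hf hv rfl
  have hmiss : ∀ v i, ∃ u, P.G.Adj v u ∧ ∀ e ∈ P.edgesAt v, e ∉ φ v i ↔ e = s(v, u) := by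
    intro v i
    have h1 := card_filter_add_card_filter_not (s := P.edgesAt v) (· ∈ φ v i)
    rw [h.card_edgesAt, card_edgesAt_filter_mem_face (hφ v i).1 (hφ v i).2.1] at h1
    obtain ⟨e, he⟩ := card_eq_one.1 (show ((P.edgesAt v).filter (· ∉ φ v i)).card = 1 by omega)
    have he' : e ∈ P.edgesAt v ∧ e ∉ φ v i := by
      have : e ∈ (P.edgesAt v).filter (· ∉ φ v i) := by rw [he, mem_singleton]
      rwa [mem_filter] at this
    obtain ⟨hadj, u, rfl⟩ := mem_edgesAt.1 he'.1
    refine ⟨u, hadj, fun e' h' => ?_⟩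
    have := congrArg (e' ∈ ·) he
    simpa [h'] using this
  choose p hadj hp using fun i v => hmiss v i
  have hinj : ∀ v, Function.Injective (p · v) := by
    intro v i j hij
    simp only at hij
    by_contra hne
    have he : s(v, p i v) ∈ P.edgesAt v := mem_edgesAt.2 ⟨hadj i v, by simp⟩
    have h1 := (hp i v _ he).2 rfl
    have h2 := (hp j v _ he).2 (by rw [hij])
    obtain ⟨f, g, hfg, hfil⟩ := exists_two_faces (mem_edgesAt.1 he).1
    have hf : f ∈ P.faces.filter (fun f => s(v, p i v) ∈ f) := by simp [hfil]
    have hg : g ∈ P.faces.filter (fun f => s(v, p i v) ∈ f) := by simp [hfil]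
    rw [mem_filter] at hf hg
    have hf' := hφ'' f hf.1 v ⟨_, hf.2, by simp⟩
    have hg' := hφ'' g hg.1 v ⟨_, hg.2, by simp⟩
    have a1 : col f ≠ i := fun hc => by
      have := hf.2
      rw [hf', hc] at this
      exact h1 this
    have a2 : col f ≠ j := fun hc => by
      have := hf.2
      rw [hf', hc] at this
      exact h2 this
    have a3 : col g ≠ i := fun hc => by
      have := hg.2
      rw [hg', hc] at this
      exact h1 this
    have a4 : col g ≠ j := fun hc => by
      have := hg.2
      rw [hg', hc] at this
      exact h2 this
    have : col f = col g := by omega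
    exact hfg (hf'.trans (this ▸ hg'.symm))
  have hex : ∀ u v, P.G.Adj u v → ∃ i, v = p i u := by
    intro u v huv
    by_contra! hne
    have he : s(u, v) ∈ P.edgesAt u := mem_edgesAt.2 ⟨huv, by simp⟩
    have h1 : ∀ i, s(u, v) ∈ φ u i := fun i => by
      by_contra hc
      exact hne i (Sym2.congr_right.1 ((hp i u _ he).1 hc))
    have h2 : univ.image (φ u) ⊆ P.faces.filter (fun f => s(u, v) ∈ f) := by
      intro f hf
      obtain ⟨i, -, rfl⟩ := mem_image.1 hf
      exact mem_filter.2 ⟨(hφ u i).1, h1 i⟩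
    have h3 := card_le_card h2
    rw [P.edge_two_faces _ huv, card_image_of_injective] at h3
    · simp at h3
    · intro i j hij
      rw [← (hφ u i).2.2, hij, (hφ u j).2.2]
  refine ⟨{
    face := fun i v => φ v i
    nbr := p
    adj_iff := fun u v => ⟨hex u v, by rintro ⟨i, rfl⟩; exact hadj i u⟩
    nbr_injective := hinj
    nbr_nbr := ?_
    face_nbr := ?_
    exists_cycle := ?_ }, fun i v => hφ v i, hφ'', fun i v e he => ?_⟩
  · intro i v
    have he : s(p i v, v) ∈ P.edgesAt (p i v) := mem_edgesAt.2 ⟨(hadj i v).symm, by simp⟩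
    have he' : s(p i v, v) ∈ P.edgesAt v := mem_edgesAt.2 ⟨(hadj i v).symm, by simp⟩
    refine (Sym2.congr_right.1 ((hp i (p i v) _ he).1 fun hc => ?_)).symm
    have h1 := hφ'' _ (hφ (p i v) i).1 v ⟨_, hc, by simp⟩
    rw [(hφ (p i v) i).2.2] at h1
    rw [h1] at hc
    exact (hp i v _ he').2 Sym2.eq_swap hc
  · intro i j v hij
    have he : s(v, p i v) ∈ P.edgesAt v := mem_edgesAt.2 ⟨hadj i v, by simp⟩
    have h1 : s(v, p i v) ∈ φ v j := by
      by_contra hc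
      exact hij (hinj v (Sym2.congr_right.1 ((hp j v _ he).1 hc)))
    have h2 := hφ'' _ (hφ v j).1 (p i v) ⟨_, h1, by simp⟩
    rw [(hφ v j).2.2] at h2
    exact h2.symm
  · intro i v
    obtain ⟨u, c, hc, hcf⟩ := P.face_cycle _ (hφ v i).1
    have hmem : ∀ e, e ∈ c.edges ↔ e ∈ φ v i := fun e => by rw [← hcf, List.mem_toFinset]
    have hsup : ∀ w, w ∈ c.support ↔ φ w i = φ v i := by
      intro w
      have h1 : w ∈ c.support ↔ OnFace (φ v i) w := by
        rw [Walk.mem_support_iff_exists_mem_edges_of_not_nil hc.not_nil]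
        simp only [hmem, OnFace]
      rw [h1]
      constructor
      · intro hw
        have := hφ'' _ (hφ v i).1 w hw
        rw [(hφ v i).2.2] at this
        exact this.symm
      · intro hw
        rw [← hw]
        exact (hφ w i).2.1
    have hv := (hsup v).2 rfl
    refine ⟨c.rotate v hv, hc.rotate hv, fun w => ?_, fun a b hab hb => ?_⟩
    · rw [Walk.mem_support_rotate_iff, hsup]
    · rw [(Walk.rotate_edges c v hv).mem_iff] at hab
      have ha : φ a i = φ v i := (hsup a).1 (c.fst_mem_support_of_mem_edges hab)
      have he : s(a, b) ∈ P.edgesAt a := mem_edgesAt.2 ⟨c.edges_subset_edgeSet hab, by simp⟩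
      rw [hmem, ← ha] at hab
      exact (hp i a _ he).2 (by rw [hb]) hab
  · have := hp i v e he
    tauto

/-- Deleting an edge from a cycle leaves a path. -/
theorem _root_.SimpleGraph.Walk.IsCycle.exists_isPath_of_mem_edges {W : Type*} [DecidableEq W]
    {G : SimpleGraph W} {a u v : W} {c : G.Walk a a} (hc : c.IsCycle) (h : s(u, v) ∈ c.edges) :
    ∃ p : G.Walk v u, p.IsPath ∧ (∀ w, w ∈ p.support ↔ w ∈ c.support) ∧
      ∀ e ∈ p.edges, e ∈ c.edges ∧ e ≠ s(u, v) := by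
  have aux : ∀ {u v : W} (c : G.Walk u u), c.IsCycle → c.snd = v →
      ∃ p : G.Walk v u, p.IsPath ∧ (∀ w, w ∈ p.support ↔ w ∈ c.support) ∧
        ∀ e ∈ p.edges, e ∈ c.edges ∧ e ≠ s(u, v) := by
    intro u v c hc hv
    match c, hc, hv with
    | .cons h p, hc, hv =>
      rw [Walk.snd_cons] at hv
      subst hv
      rw [Walk.cons_isCycle_iff] at hc
      refine ⟨p, hc.1, fun w => ?_, fun e he => ⟨by simp [he], fun h => hc.2 (h ▸ he)⟩⟩
      rw [Walk.support_cons, List.mem_cons]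
      refine ⟨Or.inr, ?_⟩
      rintro (rfl | h)
      · exact p.end_mem_support
      · exact h
  have hu : u ∈ c.support := c.fst_mem_support_of_mem_edges h
  have hcr : (c.rotate u hu).IsCycle := hc.rotate hu
  have hsup : ∀ w, w ∈ (c.rotate u hu).support ↔ w ∈ c.support := fun w =>
    c.mem_support_rotate_iff u hu
  have hedg : ∀ e, e ∈ (c.rotate u hu).edges ↔ e ∈ c.edges := fun e =>
    (c.rotate_edges u hu).mem_iff
  rw [← hedg] at h
  generalize c.rotate u hu = c' at *
  by_cases hs : c'.snd = v
  · obtain ⟨p, h1, h2, h3⟩ := aux c' hcr hs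
    exact ⟨p, h1, fun w => (h2 w).trans (hsup w), fun e he => ⟨(hedg e).1 (h3 e he).1, (h3 e he).2⟩⟩
  · have hp : c'.reverse.snd = v := by
      rw [Walk.snd_reverse]
      match c', hcr, h, hs with
      | .cons hadj p, hcr, h, hs =>
        rw [Walk.snd_cons] at hs
        rw [Walk.penultimate_cons_of_not_nil _ _ (Walk.not_nil_of_isCycle_cons hcr)]
        rw [Walk.cons_isCycle_iff] at hcr
        rw [Walk.edges_cons, List.mem_cons] at h
        rcases h with h | h
        · exact absurd (Sym2.congr_right.1 h).symm hs
        · exact (hcr.1.eq_penultimate_of_mem_edges (Sym2.eq_swap ▸ h)).symm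
    obtain ⟨p, h1, h2, h3⟩ := aux c'.reverse hcr.reverse hp
    refine ⟨p, h1, fun w => (h2 w).trans ?_, fun e he => ⟨(hedg e).1 ?_, (h3 e he).2⟩⟩
    · rw [Walk.support_reverse, List.mem_reverse, hsup]
    · simpa using (h3 e he).1

/-- Two disjoint cycles joined by two edges between neighbouring vertices can be merged. -/
theorem _root_.SimpleGraph.Walk.IsCycle.exists_merge {W : Type*} [DecidableEq W]
    {G : SimpleGraph W} {a b x y z w : W} {c₁ : G.Walk a a} {c₂ : G.Walk b b} (h₁ : c₁.IsCycle)
    (h₂ : c₂.IsCycle) (hd : ∀ v ∈ c₁.support, v ∉ c₂.support) (hzw : s(z, w) ∈ c₁.edges)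
    (hxy : s(x, y) ∈ c₂.edges) (hzx : G.Adj z x) (hyw : G.Adj y w) :
    ∃ c : G.Walk z z, c.IsCycle ∧ (∀ v, v ∈ c.support ↔ v ∈ c₁.support ∨ v ∈ c₂.support) ∧
      ∀ e ∈ c.edges, (e ∈ c₁.edges ∧ e ≠ s(z, w)) ∨ (e ∈ c₂.edges ∧ e ≠ s(x, y)) ∨
        e = s(z, x) ∨ e = s(y, w) := by
  obtain ⟨p, hp, hps, hpe⟩ := h₁.exists_isPath_of_mem_edges hzw
  rw [Sym2.eq_swap] at hxy
  obtain ⟨q, hq, hqs, hqe⟩ := h₂.exists_isPath_of_mem_edges hxy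
  have hdis : ∀ v ∈ p.support, v ∉ q.support := fun v hv hv' =>
    hd v ((hps v).1 hv) ((hqs v).1 hv')
  have hpath : (q.append (.cons hyw p)).IsPath := by
    rw [Walk.isPath_def, Walk.support_append, Walk.support_cons, List.tail_cons,
      List.nodup_append']
    exact ⟨hq.support_nodup, hp.support_nodup, fun v hv hv' => hdis v hv' hv⟩
  refine ⟨.cons hzx (q.append (.cons hyw p)), ?_, fun v => ?_, fun e he => ?_⟩
  · rw [Walk.cons_isCycle_iff]
    refine ⟨hpath, fun h => ?_⟩
    rw [Walk.edges_append, Walk.edges_cons, List.mem_append, List.mem_cons] at h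
    rcases h with h | h | h
    · exact hdis z p.end_mem_support (q.fst_mem_support_of_mem_edges h)
    · rw [Sym2.eq_iff] at h
      rcases h with ⟨rfl, rfl⟩ | ⟨rfl, rfl⟩
      · exact hdis z p.end_mem_support q.end_mem_support
      · exact (c₁.adj_of_mem_edges hzw).ne rfl
    · exact hdis x (p.snd_mem_support_of_mem_edges h) q.start_mem_support
  · rw [Walk.support_cons, List.mem_cons, Walk.support_append, Walk.support_cons, List.tail_cons,
      List.mem_append, hps, hqs]
    have := (hps z).1 p.end_mem_support
    constructor
    · rintro (rfl | h | h) <;> tauto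
    · tauto
  · rw [Walk.edges_cons, List.mem_cons, Walk.edges_append, Walk.edges_cons, List.mem_append,
      List.mem_cons] at he
    rcases he with he | he | he | he
    · exact .inr (.inr (.inl he))
    · refine .inr (.inl ?_)
      rw [Sym2.eq_swap (a := x)]
      exact hqe e he
    · exact .inr (.inr (.inr he))
    · exact .inl (hpe e he)

namespace FaceSystem

variable {G : SimpleGraph V} {S : FaceSystem G} {i j k : Fin 3}
  {X T : Finset (Finset (Sym2 V))}

/-- The three colours are distinct, the faces of colour `k` are squares, and opposite edges of such
a square lie on different faces of colour `i`. -/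
structure IsSquare (S : FaceSystem G) (i j k : Fin 3) : Prop where
  hij : i ≠ j
  hik : i ≠ k
  hjk : j ≠ k
  comm : ∀ v, S.nbr i (S.nbr j v) = S.nbr j (S.nbr i v)
  fiber : ∀ u v, S.face k u = S.face k v →
    u = v ∨ u = S.nbr i v ∨ u = S.nbr j v ∨ u = S.nbr i (S.nbr j v)
  face_nbr_ne : ∀ v, S.face i (S.nbr i v) ≠ S.face i v

set_option linter.unusedSectionVars false in
theorem adj_nbr (S : FaceSystem G) (i : Fin 3) (v : V) : G.Adj v (S.nbr i v) :=
  (S.adj_iff _ _).2 ⟨i, rfl⟩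

set_option linter.unusedSectionVars false in
theorem nbr_ne_nbr (S : FaceSystem G) (hij : i ≠ j) (v : V) : S.nbr i v ≠ S.nbr j v :=
  fun h => hij (S.nbr_injective v h)

set_option linter.unusedSectionVars false in
theorem IsSquare.eq_nbr_of_adj (h : S.IsSquare i j k) {u v : V} (huv : G.Adj u v) :
    v = S.nbr i u ∨ v = S.nbr j u ∨ v = S.nbr k u := by
  obtain ⟨l, rfl⟩ := (S.adj_iff _ _).1 huv
  have h1 := h.hij
  have h2 := h.hik
  have h3 := h.hjk
  have : l = i ∨ l = j ∨ l = k := by omega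
  rcases this with rfl | rfl | rfl <;> simp

/-- The set `T` of faces of colour `k` arises from a tree on the set `X` of faces of colour `i`: the
sum of the faces in `X` and `T` is a cycle through the vertices on the faces in `X`. -/
def IsTreeCycle (S : FaceSystem G) (i j k : Fin 3) (X T : Finset (Finset (Sym2 V))) : Prop :=
  T ⊆ univ.image (S.face k) ∧ T.card + 1 = X.card ∧
  (∀ v, S.face k v ∈ T → S.face i v ∈ X) ∧
  ∃ (v : V) (c : G.Walk v v), c.IsCycle ∧ (∀ u, u ∈ c.support ↔ S.face i u ∈ X) ∧
    ∀ u w, s(u, w) ∈ c.edges → w = S.nbr k u ∨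
      w = if S.face k u ∈ T then S.nbr i u else S.nbr j u

theorem IsSquare.isTreeCycle_singleton (h : S.IsSquare i j k) (v : V) :
    S.IsTreeCycle i j k {S.face i v} ∅ := by
  obtain ⟨c, hc, hcs, hce⟩ := S.exists_cycle i v
  refine ⟨by simp, by simp, by simp, v, c, hc, by simpa using hcs, fun u w huw => ?_⟩
  have h1 := hce u w huw
  have h2 := h.eq_nbr_of_adj (c.adj_of_mem_edges huw)
  simp only [notMem_empty, if_false]
  tauto

theorem IsSquare.isTreeCycle_insert (h : S.IsSquare i j k) (hT : S.IsTreeCycle i j k X T) {x : V}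
    (hx : S.face i x ∉ X) (hx' : S.face i (S.nbr i x) ∈ X) :
    S.IsTreeCycle i j k (insert (S.face i x) X) (insert (S.face k x) T) := by
  obtain ⟨hTk, hTc, hTX, v, c, hc, hcs, hce⟩ := hT
  obtain ⟨d, hd, hds, hde⟩ := S.exists_cycle i x
  have hq : S.face k x ∉ T := fun hq => hx (hTX x hq)
  have hkz : S.face k (S.nbr i x) = S.face k x := S.face_nbr _ _ _ h.hik
  have hky : S.face k (S.nbr j x) = S.face k x := S.face_nbr _ _ _ h.hjk
  have hkw : S.face k (S.nbr j (S.nbr i x)) = S.face k x := by rw [S.face_nbr _ _ _ h.hjk, hkz]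
  have hiy : S.face i (S.nbr j x) = S.face i x := S.face_nbr _ _ _ h.hij.symm
  have hiw : S.face i (S.nbr j (S.nbr i x)) = S.face i (S.nbr i x) := S.face_nbr _ _ _ h.hij.symm
  have hzw : s(S.nbr i x, S.nbr j (S.nbr i x)) ∈ c.edges := by
    obtain ⟨w, hw, hwe⟩ := hc.exists_mem_edges_ne ((hcs _).2 hx') (S.nbr k (S.nbr i x))
    have := (hce _ _ hwe).resolve_left hw
    rw [hkz, if_neg hq] at this
    rwa [← this]
  have hxy : s(x, S.nbr j x) ∈ d.edges := by
    obtain ⟨w, hw, hwe⟩ := hd.exists_mem_edges_ne ((hds x).2 rfl) (S.nbr k x)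
    have h1 := hde _ _ hwe
    have h2 := h.eq_nbr_of_adj (d.adj_of_mem_edges hwe)
    have h3 : w = S.nbr j x := by tauto
    rwa [← h3]
  have hwi : S.nbr j (S.nbr i x) = S.nbr i (S.nbr j x) := (h.comm x).symm
  obtain ⟨m, hm, hms, hme⟩ := hc.exists_merge hd (fun u hu hu' => hx ((hds u).1 hu' ▸ (hcs u).1 hu))
    hzw hxy (S.adj_nbr i x).symm (hwi ▸ S.adj_nbr i (S.nbr j x))
  refine ⟨?_, ?_, ?_, _, m, hm, fun u => ?_, fun a b hab => ?_⟩
  · exact insert_subset (mem_image_of_mem _ (mem_univ x)) hTk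
  · rw [card_insert_of_notMem hq, card_insert_of_notMem hx, hTc]
  · intro u hu
    rw [mem_insert] at hu ⊢
    rcases hu with hu | hu
    · rcases h.fiber _ _ hu with rfl | rfl | rfl | rfl
      · exact .inl rfl
      · exact .inr hx'
      · exact .inl hiy
      · rw [h.comm, hiw]
        exact .inr hx'
    · exact .inr (hTX u hu)
  · rw [hms, hcs, hds, mem_insert, or_comm]
  · rcases hme _ hab with ⟨he, hne⟩ | ⟨he, hne⟩ | he | he
    · refine (hce a b he).imp_right fun hb => ?_
      have ha : S.face i a ∈ X := (hcs a).1 (c.fst_mem_support_of_mem_edges he)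
      by_cases hak : S.face k a = S.face k x
      · exfalso
        rw [hak, if_neg hq] at hb
        subst hb
        rcases h.fiber _ _ hak with rfl | rfl | rfl | rfl
        · exact hx ha
        · exact hne rfl
        · exact hx (hiy ▸ ha)
        · refine hne ?_
          rw [h.comm, S.nbr_nbr, Sym2.eq_swap]
      · rw [hb]
        simp only [mem_insert, hak, false_or]
    · have h1 := hde _ _ he
      have h2 := h.eq_nbr_of_adj (d.adj_of_mem_edges he)
      have ha : S.face i a = S.face i x := (hds a).1 (d.fst_mem_support_of_mem_edges he)
      rcases h2 with h2 | h2 | h2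
      · exact absurd h2 h1
      · right
        subst h2
        rw [if_neg]
        rw [mem_insert]
        rintro (hak | hak)
        · rcases h.fiber _ _ hak with rfl | rfl | rfl | rfl
          · exact hne rfl
          · exact hx (ha ▸ hx')
          · refine hne ?_
            rw [S.nbr_nbr, Sym2.eq_swap]
          · rw [h.comm, hiw] at ha
            exact hx (ha ▸ hx')
        · exact hx (ha ▸ hTX a hak)
      · exact .inl h2
    · right
      rw [Sym2.eq_iff] at he
      rcases he with ⟨rfl, rfl⟩ | ⟨rfl, rfl⟩
      · rw [hkz, if_pos (mem_insert_self _ _), S.nbr_nbr]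
      · rw [if_pos (mem_insert_self _ _)]
    · right
      rw [Sym2.eq_iff] at he
      rcases he with ⟨rfl, rfl⟩ | ⟨rfl, rfl⟩
      · rw [hky, if_pos (mem_insert_self _ _), hwi]
      · rw [hkw, if_pos (mem_insert_self _ _), hwi, S.nbr_nbr]

open scoped Classical in
/-- The number of sets of squares arising from trees on `X`. -/
noncomputable def treeCount (S : FaceSystem G) (i j k : Fin 3) (X : Finset (Finset (Sym2 V))) : ℕ :=
  (univ.filter (S.IsTreeCycle i j k X)).card

open scoped Classical in
/-- The faces of colour `k` all of whose vertices are on faces in `X`. -/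
noncomputable def inner (S : FaceSystem G) (i k : Fin 3) (X : Finset (Finset (Sym2 V))) :
    Finset (Finset (Sym2 V)) :=
  (univ.image (S.face k)).filter fun q => ∀ v, S.face k v = q → S.face i v ∈ X

open scoped Classical in
/-- The faces of colour `k` that join the face `f` of colour `i` to a face in `X`. -/
noncomputable def link (S : FaceSystem G) (i k : Fin 3) (X : Finset (Finset (Sym2 V)))
    (f : Finset (Sym2 V)) : Finset (Finset (Sym2 V)) :=
  (univ.filter fun v => S.face i v = f ∧ S.face i (S.nbr i v) ∈ X).image (S.face k)

theorem IsSquare.treeCount_mul_le (h : S.IsSquare i j k) {f : Finset (Sym2 V)} (hf : f ∉ X) :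
    S.treeCount i j k X * (S.link i k X f).card ≤ S.treeCount i j k (insert f X) := by
  classical
  rw [treeCount, treeCount, ← card_product]
  refine card_le_card_of_injOn (fun t => insert t.2 t.1) ?_ ?_
  · rintro ⟨T, q⟩ ht
    simp only [link, coe_product, Set.mem_prod, mem_coe, mem_filter, mem_univ, true_and,
      mem_image] at ht
    obtain ⟨hT, x, ⟨rfl, hx⟩, rfl⟩ := ht
    simpa using h.isTreeCycle_insert hT hf hx
  · rintro ⟨T, q⟩ ht ⟨T', q'⟩ ht' heq
    simp only [link, coe_product, Set.mem_prod, mem_coe, mem_filter, mem_univ, true_and,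
      mem_image] at ht ht'
    obtain ⟨hT, x, ⟨rfl, hx⟩, rfl⟩ := ht
    obtain ⟨hT', x', ⟨hf', hx'⟩, rfl⟩ := ht'
    simp only at heq
    have h1 : S.face k x ∉ T := fun hq => hf (hT.2.2.1 x hq)
    have h2 : S.face k x ∉ T' := fun hq => hf (hT'.2.2.1 x hq)
    have h3 : S.face k x = S.face k x' :=
      (mem_insert.1 (heq ▸ mem_insert_self _ T)).resolve_right h2
    rw [← h3] at heq ⊢
    rw [← erase_insert h1, heq, erase_insert h2]

theorem IsSquare.card_inner_insert_le (h : S.IsSquare i j k) (f : Finset (Sym2 V)) :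
    (S.inner i k (insert f X)).card ≤ (S.inner i k X).card + (S.link i k X f).card := by
  classical
  refine (card_le_card ?_).trans (card_union_le _ _)
  intro q hq
  simp only [inner, mem_filter, mem_union, link, mem_image, mem_univ, true_and] at hq ⊢
  by_cases hX : ∀ v, S.face k v = q → S.face i v ∈ X
  · exact .inl ⟨hq.1, hX⟩
  · push Not at hX
    obtain ⟨v, rfl, hv⟩ := hX
    have h1 := (mem_insert.1 (hq.2 v rfl)).resolve_right hv
    have h2 := hq.2 (S.nbr i v) (S.face_nbr _ _ _ h.hik)
    rw [mem_insert, ← h1] at h2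
    exact .inr ⟨v, ⟨h1, h2.resolve_left (h.face_nbr_ne v)⟩, rfl⟩

theorem IsSquare.two_mul_card_link_le (h : S.IsSquare i j k) (f : Finset (Sym2 V)) :
    2 * (S.link i k X f).card ≤ (univ.filter fun v => S.face i v = f).card := by
  classical
  refine (mul_card_image_le_card _ 2 fun q hq => ?_).trans
    (card_le_card (t := univ.filter fun v => S.face i v = f) ?_)
  · simp only [mem_image, mem_filter, mem_univ, true_and] at hq
    obtain ⟨x, ⟨hf, hx⟩, rfl⟩ := hq
    rw [← card_pair (S.adj_nbr j x).ne]
    refine card_le_card ?_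
    intro u hu
    rw [mem_insert, mem_singleton] at hu
    rcases hu with rfl | rfl
    · simp [hf, hx]
    · have h1 : S.face i (S.nbr j x) = S.face i x := S.face_nbr _ _ _ h.hij.symm
      have h2 : S.face i (S.nbr i (S.nbr j x)) = S.face i (S.nbr i x) := by
        rw [h.comm, S.face_nbr _ _ _ h.hij.symm]
      simp [h1, h2, hf, hx, S.face_nbr _ _ _ h.hjk]
  · intro v hv
    simp only [mem_filter, mem_univ, true_and] at hv ⊢
    exact hv.1

theorem _root_.SimpleGraph.Connected.exists_adj_of_mem_of_notMem {W : Type*} {G : SimpleGraph W}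
    (hG : G.Connected) {p : W → Prop} {u v : W} (hu : p u) (hv : ¬ p v) :
    ∃ a b, G.Adj a b ∧ p a ∧ ¬ p b := by
  by_contra! hc
  refine hv ((hG.eq_of_adj p (fun a b hab => ?_) u v) ▸ hu)
  exact propext ⟨hc a b hab, hc b a hab.symm⟩

theorem IsSquare.exists_treeCount_ge (h : S.IsSquare i j k) (hG : G.Connected) {d : ℕ}
    (hd : ∀ f, (univ.filter fun v => S.face i v = f).card ≤ 2 * d + 1) (m : ℕ)
    (hm : m + 1 ≤ (univ.image (S.face i)).card) :
    ∃ X ⊆ univ.image (S.face i), X.card = m + 1 ∧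
      2 ^ (S.inner i k X).card ≤ 2 ^ m * S.treeCount i j k X ^ (d - 1) := by
  classical
  induction m with
  | zero =>
    obtain ⟨v⟩ := hG.nonempty
    refine ⟨{S.face i v}, by simp, by simp, ?_⟩
    have h1 : S.inner i k {S.face i v} = ∅ := by
      rw [inner, filter_eq_empty_iff]
      intro q hq hall
      obtain ⟨u, -, rfl⟩ := mem_image.1 hq
      have h2 := hall u rfl
      have h3 := hall (S.nbr i u) (S.face_nbr _ _ _ h.hik)
      rw [mem_singleton] at h2 h3
      exact h.face_nbr_ne u (h3.trans h2.symm)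
    have h2 : 0 < S.treeCount i j k {S.face i v} :=
      card_pos.2 ⟨∅, by simpa using h.isTreeCycle_singleton v⟩
    rw [h1, card_empty, pow_zero, one_mul]
    exact Nat.pow_pos h2
  | succ m ih =>
    obtain ⟨X, hX, hXc, hle⟩ := ih (by omega)
    obtain ⟨f₀, hf₀, hf₀X⟩ := exists_mem_notMem_of_card_lt_card
      (show X.card < (univ.image (S.face i)).card by omega)
    obtain ⟨v, -, rfl⟩ := mem_image.1 hf₀
    obtain ⟨g, hg⟩ := card_pos.1 (show 0 < X.card by omega)
    obtain ⟨u, -, rfl⟩ := mem_image.1 (hX hg)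
    obtain ⟨a, b, hab, ha, hb⟩ := hG.exists_adj_of_mem_of_notMem
      (p := fun v => S.face i v ∈ X) hg hf₀X
    have hba : a = S.nbr i b := by
      rcases h.eq_nbr_of_adj hab.symm with h1 | h1 | h1
      · exact h1
      · rw [h1, S.face_nbr _ _ _ h.hij.symm] at ha
        exact absurd ha hb
      · rw [h1, S.face_nbr _ _ _ h.hik.symm] at ha
        exact absurd ha hb
    rw [hba] at ha
    refine ⟨insert (S.face i b) X, insert_subset (by simp) hX,
      by rw [card_insert_of_notMem hb, hXc], ?_⟩
    have h1 := h.treeCount_mul_le hb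
    have h2 := h.card_inner_insert_le (X := X) (S.face i b)
    have h3 := h.two_mul_card_link_le (X := X) (S.face i b)
    have h4 := hd (S.face i b)
    have h5 : 0 < (S.link i k X (S.face i b)).card :=
      card_pos.2 ⟨S.face k b, mem_image_of_mem _ (by simpa using ha)⟩
    generalize (S.link i k X (S.face i b)).card = r at *
    have h6 : 2 ^ (r - 1) ≤ r ^ (d - 1) := by
      obtain rfl | hr : r = 1 ∨ 2 ≤ r := by omega
      · simp
      · exact (Nat.pow_le_pow_right two_pos (by omega)).trans (Nat.pow_le_pow_left hr _)
    calc 2 ^ (S.inner i k (insert (S.face i b) X)).card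
        ≤ 2 ^ ((S.inner i k X).card + r) := Nat.pow_le_pow_right two_pos h2
      _ = 2 * (2 ^ (S.inner i k X).card * 2 ^ (r - 1)) := by
        rw [← pow_add, ← pow_succ']
        congr 1
        omega
      _ ≤ 2 * ((2 ^ m * S.treeCount i j k X ^ (d - 1)) * r ^ (d - 1)) := by gcongr
      _ = 2 ^ (m + 1) * (S.treeCount i j k X * r) ^ (d - 1) := by ring
      _ ≤ _ := by gcongr

/-- Many Hamilton cycles, each containing all edges off the faces of colour `k`. -/
theorem IsSquare.exists_hamiltonianCycles (h : S.IsSquare i j k) (hG : G.Connected) {d : ℕ}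
    (hd : ∀ f, (univ.filter fun v => S.face i v = f).card ≤ 2 * d + 1) :
    ∃ H : Finset (Set (Sym2 V)),
      (∀ s ∈ H, (∃ (v : V) (w : G.Walk v v), w.IsHamiltonianCycle ∧ s = {e | e ∈ w.edges}) ∧
        (∀ v, s(v, S.nbr k v) ∈ s) ∧
        ((univ.image (S.face i)).card ≤ (univ.image (S.face k)).card →
          ∃ v, s(v, S.nbr i v) ∉ s)) ∧
      2 ^ (univ.image (S.face k)).card ≤
        2 ^ ((univ.image (S.face i)).card - 1) * H.card ^ (d - 1) := by
  classical
  have hpos : 0 < (univ.image (S.face i)).card := by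
    obtain ⟨v⟩ := hG.nonempty
    exact card_pos.2 ⟨S.face i v, by simp⟩
  obtain ⟨X, hX, hXc, hle⟩ := h.exists_treeCount_ge hG hd ((univ.image (S.face i)).card - 1)
    (by omega)
  obtain rfl := eq_of_subset_of_card_le hX (by omega)
  have hin : S.inner i k (univ.image (S.face i)) = univ.image (S.face k) := by
    rw [inner, filter_eq_self]
    intro q _ v _
    simp
  rw [hin] at hle
  set A := univ.image (S.face i)
  have key : ∀ T, S.IsTreeCycle i j k A T → ∃ s : Set (Sym2 V),
      (∃ (v : V) (w : G.Walk v v), w.IsHamiltonianCycle ∧ s = {e | e ∈ w.edges}) ∧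
      (∀ v, s(v, S.nbr k v) ∈ s) ∧ ∀ v, (s(v, S.nbr i v) ∈ s ↔ S.face k v ∈ T) := by
    rintro T ⟨-, -, -, v, c, hc, hcs, hce⟩
    have hcs' : ∀ u, u ∈ c.support := fun u => (hcs u).2 (by simp [A])
    refine ⟨{e | e ∈ c.edges}, ⟨v, c, ⟨hc, ?_⟩, rfl⟩, fun v => ?_, fun v => ?_⟩
    · refine hc.isPath_tail.isHamiltonian_of_mem fun w => ?_
      rw [Walk.support_tail_of_not_nil _ hc.not_nil]
      have := hcs' w
      rw [Walk.mem_support_iff] at this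
      rcases this with rfl | h
      · exact Walk.end_mem_tail_support hc.not_nil
      · exact h
    · obtain ⟨w, hw, hwe⟩ := hc.exists_mem_edges_ne (hcs' v)
        (if S.face k v ∈ T then S.nbr i v else S.nbr j v)
      have := (hce v w hwe).resolve_right hw
      exact this ▸ hwe
    · constructor
      · intro he
        by_contra hT
        have := hce v _ he
        rw [if_neg hT] at this
        exact this.elim (S.nbr_ne_nbr h.hik v) (S.nbr_ne_nbr h.hij v)
      · intro hT
        obtain ⟨w, hw, hwe⟩ := hc.exists_mem_edges_ne (hcs' v) (S.nbr k v)
        have := (hce v w hwe).resolve_left hw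
        rw [if_pos hT] at this
        exact this ▸ hwe
  choose! s hs1 hs2 hs3 using key
  refine ⟨(univ.filter (S.IsTreeCycle i j k A)).image s, ?_, ?_⟩
  · intro t ht
    obtain ⟨T, hT, rfl⟩ := mem_image.1 ht
    replace hT := (mem_filter.1 hT).2
    refine ⟨hs1 T hT, hs2 T hT, fun hak => ?_⟩
    have h1 := hT.2.1
    obtain ⟨q, hq, hqT⟩ := exists_mem_notMem_of_card_lt_card
      (show T.card < (univ.image (S.face k)).card by omega)
    obtain ⟨v, -, rfl⟩ := mem_image.1 hq
    exact ⟨v, fun hv => hqT ((hs3 T hT v).1 hv)⟩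
  · have hinj : Set.InjOn s (univ.filter (S.IsTreeCycle i j k A)) := by
      intro T hT T' hT' heq
      simp only [coe_filter, mem_univ, true_and, Set.mem_ofPred_eq] at hT hT'
      have h1 : ∀ v, S.face k v ∈ T ↔ S.face k v ∈ T' := fun v => by
        rw [← hs3 T hT, ← hs3 T' hT', heq]
      ext q
      constructor
      · intro hq
        obtain ⟨v, -, rfl⟩ := mem_image.1 (hT.1 hq)
        exact (h1 v).1 hq
      · intro hq
        obtain ⟨v, -, rfl⟩ := mem_image.1 (hT'.1 hq)
        exact (h1 v).2 hq
    rwa [card_image_of_injOn hinj]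

end FaceSystem

/-- The face system `S` describes the faces of `P` and their colours. -/
structure IsFaceSystem (P : PlaneGraph V) (col : Finset (Sym2 V) → Fin 3) (S : FaceSystem P.G) :
    Prop where
  face_mem : ∀ i v, S.face i v ∈ P.faces
  onFace : ∀ i v, OnFace (S.face i v) v
  col_face : ∀ i v, col (S.face i v) = i
  eq_face : ∀ f ∈ P.faces, ∀ v, OnFace f v → f = S.face (col f) v
  mem_face_iff : ∀ i v e, e ∈ P.edgesAt v → (e ∈ S.face i v ↔ e ≠ s(v, S.nbr i v))

namespace IsFaceSystem

variable {col : Finset (Sym2 V) → Fin 3} {S : FaceSystem P.G} {i j k : Fin 3}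

theorem mk_nbr_mem_iff (h : P.IsFaceSystem col S) (hf : f ∈ P.faces) (j : Fin 3) (v : V) :
    s(v, S.nbr j v) ∈ f ↔ f = S.face (col f) v ∧ col f ≠ j := by
  have h1 : s(v, S.nbr j v) ∈ P.edgesAt v :=
    mem_edgesAt.2 ⟨S.adj_nbr j v, Sym2.mem_mk_left _ _⟩
  have h2 : ∀ l, s(v, S.nbr j v) ∈ S.face l v ↔ l ≠ j := fun l => by
    rw [h.mem_face_iff l v _ h1, Ne, Sym2.congr_right, not_iff_not]
    exact ⟨fun h => (S.nbr_injective v h).symm, fun h => by rw [h]⟩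
  constructor
  · intro he
    have h3 := h.eq_face f hf v ⟨_, he, Sym2.mem_mk_left _ _⟩
    exact ⟨h3, (h2 _).1 (h3 ▸ he)⟩
  · rintro ⟨h3, h4⟩
    rw [h3]
    exact (h2 _).2 h4

theorem card_fiber (h : P.IsFaceSystem col S) (i : Fin 3) (v : V) :
    (univ.filter fun u => S.face i u = S.face i v).card = (S.face i v).card := by
  classical
  rw [← card_filter_onFace (h.face_mem i v)]
  congr 1
  ext u
  simp only [mem_filter, mem_univ, true_and]
  constructor
  · intro hu
    rw [← hu]
    exact h.onFace i u
  · intro hu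
    have := h.eq_face _ (h.face_mem i v) u hu
    rw [h.col_face] at this
    exact this.symm

/-- In a 3-connected cubic plane graph, no edge joins a face to itself. -/
theorem face_nbr_ne (h : P.IsFaceSystem col S) (hP : P.Cubic) (h3 : P.ThreeConnected) (i : Fin 3)
    (v : V) : S.face i (S.nbr i v) ≠ S.face i v := by
  classical
  intro heq
  obtain ⟨j, hij⟩ : ∃ j, i ≠ j := ⟨i + 1, by omega⟩
  set u := S.nbr i v with hu
  have huv : u ≠ v := (S.adj_nbr i v).ne'
  have huj : u ≠ S.nbr j v := S.nbr_ne_nbr hij v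
  have hvj : v ≠ S.nbr j u := fun hv => huj (by rw [hv, S.nbr_nbr])
  have hjj : S.nbr j v ≠ S.nbr j u := fun hv => huv (by rw [← S.nbr_nbr j u, ← hv, S.nbr_nbr])
  let e₁ : P.G.edgeSet := ⟨s(v, S.nbr j v), S.adj_nbr j v⟩
  let e₂ : P.G.edgeSet := ⟨s(u, S.nbr j u), S.adj_nbr j u⟩
  have hface : ∀ f ∈ P.faces, e₁.1 ∈ f ↔ e₂.1 ∈ f := by
    intro f hf
    rw [h.mk_nbr_mem_iff hf, h.mk_nbr_mem_iff hf]
    have : S.face (col f) u = S.face (col f) v := by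
      by_cases hc : i = col f
      · rw [← hc, heq]
      · exact S.face_nbr _ _ _ hc
    rw [this]
  let z : P.G.edgeSet → ZMod 2 := fun e => (if e = e₁ then 1 else 0) + if e = e₂ then 1 else 0
  have hz : P.faceMatrix.mulVec z = 0 := by
    funext f
    have h1 := hface f.1 f.2
    simp only [Matrix.mulVec, dotProduct, z, mul_add, sum_add_distrib, mul_ite, mul_one, mul_zero,
      sum_ite_eq', mem_univ, if_true, faceMatrix, Pi.zero_apply, h1]
    exact CharTwo.add_self_eq_zero _
  obtain ⟨x, hx⟩ := hP.exists_edgeMatrix_mulVec_eq h3.connected_s12 z hz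
  have hx' : ∀ a b (hab : P.G.Adj a b), x a + x b =
      (if s(a, b) = e₁.1 then 1 else 0) + if s(a, b) = e₂.1 then 1 else 0 := by
    intro a b hab
    rw [← edgeMatrix_mulVec x hab, hx]
    simp only [z, Subtype.ext_iff]
  have h1 : x v + x (S.nbr j v) = 1 := by
    rw [hx' _ _ (S.adj_nbr j v), if_pos rfl, if_neg, add_zero]
    simp only [e₂, Sym2.eq_iff]
    tauto
  have h2 : x v + x u = 0 := by
    rw [hx' _ _ (S.adj_nbr i v), if_neg, if_neg, add_zero]
    · simp only [e₂, Sym2.eq_iff]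
      tauto
    · simp only [e₁, ← hu, Sym2.eq_iff]
      tauto
  have hc := h3.2 {v, S.nbr j u} ((Set.ncard_insert_le _ _).trans (by simp))
  have h4 : x u = x (S.nbr j v) := by
    refine hc.eq_of_adj (fun a => x a.1) ?_ ⟨u, ?_⟩ ⟨S.nbr j v, ?_⟩
    · rintro ⟨a, ha⟩ ⟨b, hb⟩ hab
      have hab' : P.G.Adj a b := hab
      simp only [Set.mem_compl_iff, Set.mem_insert_iff, Set.mem_singleton_iff, not_or] at ha hb
      refine CharTwo.add_eq_zero.1 ((hx' a b hab').trans ?_)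
      rw [if_neg, if_neg, add_zero]
      · simp only [e₂, Sym2.eq_iff]
        tauto
      · simp only [e₁, Sym2.eq_iff]
        tauto
    · simp only [Set.mem_compl_iff, Set.mem_insert_iff, Set.mem_singleton_iff, not_or]
      exact ⟨huv, (S.adj_nbr j u).ne⟩
    · simp only [Set.mem_compl_iff, Set.mem_insert_iff, Set.mem_singleton_iff, not_or]
      exact ⟨(S.adj_nbr j v).ne', hjj⟩
  rw [← h4, h2] at h1
  exact zero_ne_one h1

theorem isSquare (h : P.IsFaceSystem col S) (hP : P.Cubic) (h3 : P.ThreeConnected)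
    (hij : i ≠ j) (hik : i ≠ k) (hjk : j ≠ k) (hk : ∀ v, (S.face k v).card = 4) :
    S.IsSquare i j k := by
  have hne : ∀ v, S.nbr i (S.nbr j v) ≠ v := fun v hv =>
    S.nbr_ne_nbr hij v (by rw [← S.nbr_nbr i (S.nbr j v), hv])
  have hfib : ∀ u v, S.face k u = S.face k v →
      u = v ∨ u = S.nbr i v ∨ u = S.nbr j v ∨ u = S.nbr i (S.nbr j v) := by
    intro u v huv
    have hsub : ({v, S.nbr i v, S.nbr j v, S.nbr i (S.nbr j v)} : Finset V) ⊆
        univ.filter fun u => S.face k u = S.face k v := by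
      simp [insert_subset_iff, S.face_nbr _ _ _ hik, S.face_nbr _ _ _ hjk]
    have hcard : ({v, S.nbr i v, S.nbr j v, S.nbr i (S.nbr j v)} : Finset V).card = 4 := by
      have h1 : S.nbr i v ≠ S.nbr i (S.nbr j v) := fun hv =>
        (S.adj_nbr j v).ne
          ((S.nbr_nbr i v).symm.trans ((congrArg (S.nbr i) hv).trans (S.nbr_nbr i _)))
      rw [card_insert_of_notMem, card_insert_of_notMem, card_insert_of_notMem, card_singleton]
      · simpa using (S.adj_nbr i _).ne
      · simpa using ⟨S.nbr_ne_nbr hij v, h1⟩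
      · simpa using ⟨(S.adj_nbr i v).ne, (S.adj_nbr j v).ne, (hne v).symm⟩
    have heq := eq_of_subset_of_card_le hsub (by rw [h.card_fiber, hk, hcard])
    have : u ∈ univ.filter fun u => S.face k u = S.face k v := by simpa using huv
    rw [← heq] at this
    simpa using this
  refine ⟨hij, hik, hjk, fun v => ?_, hfib, h.face_nbr_ne hP h3 i⟩
  rcases hfib (S.nbr j (S.nbr i v)) v
    (by rw [S.face_nbr _ _ _ hjk, S.face_nbr _ _ _ hik]) with h1 | h1 | h1 | h1
  · exact absurd (by rw [← S.nbr_nbr j (S.nbr i v), h1]) (S.nbr_ne_nbr hij v)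
  · exact absurd h1 (S.adj_nbr j _).ne'
  · exact absurd (by rw [← S.nbr_nbr j (S.nbr i v), h1, S.nbr_nbr]) (S.adj_nbr i v).ne'
  · exact h1.symm

theorem two_mul_card_face_le (h : P.IsFaceSystem col S) (hP : P.Cubic) (h3 : P.ThreeConnected)
    (i : Fin 3) (v : V) : 2 * (S.face i v).card ≤ Fintype.card V := by
  rw [← h.card_fiber]
  have h1 : (univ.filter fun u => S.face i u = S.face i v).card ≤
      (univ.filter fun u => ¬ S.face i u = S.face i v).card := by
    refine card_le_card_of_injOn (S.nbr i) ?_ (Function.LeftInverse.injective (S.nbr_nbr i)).injOn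
    intro u hu
    simp only [coe_filter, mem_univ, true_and, Set.mem_ofPred_eq] at hu ⊢
    exact hu ▸ h.face_nbr_ne hP h3 i u
  have h2 := card_filter_add_card_filter_not (s := univ) fun u => S.face i u = S.face i v
  rw [card_univ] at h2
  omega

theorem even_card_face (h : P.IsFaceSystem col S) (i : Fin 3) (v : V) :
    Even (S.face i v).card := by
  obtain ⟨j, hij⟩ : ∃ j, j ≠ i := ⟨i + 1, by omega⟩
  rw [← h.card_fiber, ← ZMod.natCast_eq_zero_iff_even, card_eq_sum_ones, Nat.cast_sum]
  refine sum_involution (fun u _ => S.nbr j u) (fun _ _ => by decide)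
    (fun u _ _ => (S.adj_nbr j u).ne') (fun u hu => ?_) (fun u _ => S.nbr_nbr j u)
  simpa [S.face_nbr _ _ _ hij] using hu

theorem sum_card_face (h : P.IsFaceSystem col S) (i : Fin 3) :
    ∑ f ∈ univ.image (S.face i), f.card = Fintype.card V := by
  rw [← card_univ, card_eq_sum_card_image (S.face i) univ]
  refine sum_congr rfl fun f hf => ?_
  obtain ⟨v, -, rfl⟩ := mem_image.1 hf
  exact (h.card_fiber i v).symm

theorem card_faces (h : P.IsFaceSystem col S) :
    P.faces.card = ∑ i, (univ.image (S.face i)).card := by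
  rw [card_eq_sum_card_fiberwise (f := col) (t := univ) (by simp)]
  refine sum_congr rfl fun i _ => ?_
  congr 1
  ext f
  simp only [mem_filter, mem_image, mem_univ, true_and]
  constructor
  · rintro ⟨hf, rfl⟩
    obtain ⟨v, hv⟩ := exists_onFace hf
    exact ⟨v, (h.eq_face f hf v hv).symm⟩
  · rintro ⟨v, rfl⟩
    exact ⟨h.face_mem i v, h.col_face i v⟩

end IsFaceSystem

theorem Cubic.two_mul_card_faces (h : P.Cubic) : 2 * P.faces.card = Fintype.card V + 4 := by
  classical
  have h1 := P.euler
  have h2 := P.G.sum_degrees_eq_twice_card_edges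
  have h3 : ∀ v, P.G.degree v = 3 := fun v => by
    rw [← h v, ← card_neighborSet_eq_degree, Set.ncard_eq_toFinset_card', Set.toFinset_card]
  simp only [h3, sum_const, card_univ, smul_eq_mul] at h2
  rw [Set.ncard_eq_toFinset_card', ← edgeFinset] at h1
  omega

theorem _root_.Real.three_rpow_le_of_two_pow_le {n d D N : ℕ} (hd : 3 ≤ d) (hn : d ≤ n)
    (hD : 2 * d ≤ D) (h : 2 ^ n ≤ N ^ (2 * (d - 1))) :
    (3 : ℝ) ^ (2 * (2 * (n : ℝ) + 2) / (D : ℝ) ^ 2) ≤ N := by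
  obtain ⟨c, rfl⟩ : ∃ c, d = c + 1 := ⟨d - 1, by omega⟩
  have hc : (2 : ℝ) ≤ c := by exact_mod_cast (by omega : 2 ≤ c)
  have hn' : (c : ℝ) + 1 ≤ n := by exact_mod_cast hn
  have hD' : 2 * ((c : ℝ) + 1) ≤ D := by exact_mod_cast hD
  rw [Nat.add_sub_cancel] at h
  have hexp : 2 * (2 * (n : ℝ) + 2) / (D : ℝ) ^ 2 * (2 * c : ℕ) ≤ 5 * (n / 8) := by
    have h1 : (2 * ((c : ℝ) + 1)) ^ 2 ≤ (D : ℝ) ^ 2 := by gcongr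
    rw [div_mul_eq_mul_div, div_le_iff₀ (by nlinarith)]
    refine le_trans ?_ (mul_le_mul_of_nonneg_left h1 (by positivity))
    push_cast
    nlinarith [mul_nonneg (sub_nonneg.2 hc) (sub_nonneg.2 hn'),
      mul_nonneg (mul_nonneg (sub_nonneg.2 hc) (sub_nonneg.2 hc)) (sub_nonneg.2 hn')]
  refine le_of_pow_le_pow_left₀ (n := 2 * c) (by omega) (by positivity) ?_
  calc ((3 : ℝ) ^ (2 * (2 * (n : ℝ) + 2) / (D : ℝ) ^ 2)) ^ (2 * c)
      = 3 ^ (2 * (2 * (n : ℝ) + 2) / (D : ℝ) ^ 2 * (2 * c : ℕ)) := by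
        rw [Real.rpow_mul_natCast (by norm_num)]
    _ ≤ 3 ^ (5 * (n / 8 : ℝ)) := Real.rpow_le_rpow_of_exponent_le (by norm_num) hexp
    _ = (3 ^ (5 : ℝ)) ^ (n / 8 : ℝ) := Real.rpow_mul (by norm_num) _ _
    _ ≤ (2 ^ (8 : ℝ)) ^ (n / 8 : ℝ) := by gcongr; norm_num
    _ = 2 ^ n := by
        rw [← Real.rpow_mul (by norm_num), mul_div_cancel₀ _ (by norm_num), Real.rpow_natCast]
    _ ≤ (N : ℝ) ^ (2 * c) := by exact_mod_cast h

end PlaneGraph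

open PlaneGraph Finset in
/-- A cubic 3-connected bipartite plane graph with a 2-factor of facial 4-cycles
has at least `3^(2|P*|/Δ(P*)²)` different Hamilton cycles, where `|P*|` is the
number of faces and `Δ(P*)` the maximum face boundary length. -/
theorem stmt12 (P : PlaneGraph V)
    (hCubic : P.Cubic) (hBip : P.Bipartite) (h3 : P.ThreeConnected)
    (h2F : P.HasFacialSquareTwoFactor) :
    (3 : ℝ) ^ ((2 * (P.faces.card : ℝ)) / ((P.faces.sup Finset.card : ℕ) : ℝ) ^ 2) ≤
      ({s : Set (Sym2 V) | ∃ (v : V) (w : P.G.Walk v v),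
          w.IsHamiltonianCycle ∧ s = {e | e ∈ w.edges}}.ncard : ℝ) := by
  classical
  obtain ⟨col, hcol, hcol4⟩ := hCubic.exists_isFaceColoring h3.connected_s12 h2F
  obtain ⟨S, hS1, hS2, hS3⟩ := hcol.exists_faceSystem hCubic
  have hS : P.IsFaceSystem col S := ⟨fun i v => (hS1 i v).1, fun i v => (hS1 i v).2.1,
    fun i v => (hS1 i v).2.2, hS2, hS3⟩
  have h4 : ∀ v, (S.face 2 v).card = 4 := fun v => hcol4 _ (hS.face_mem 2 v) (hS.col_face 2 v)
  set D := P.faces.sup Finset.card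
  set N := {s : Set (Sym2 V) | ∃ (v : V) (w : P.G.Walk v v),
    w.IsHamiltonianCycle ∧ s = {e | e ∈ w.edges}}.ncard with hN
  have hH : ∀ H : Finset (Set (Sym2 V)), (∀ s ∈ H, ∃ (v : V) (w : P.G.Walk v v),
      w.IsHamiltonianCycle ∧ s = {e | e ∈ w.edges}) → H.card ≤ N := fun H h => by
    rw [hN, ← Set.ncard_coe_finset]
    exact Set.ncard_le_ncard h (Set.toFinite _)
  have hD : ∀ i v, (S.face i v).card ≤ D := fun i v => le_sup (f := Finset.card) (hS.face_mem i v)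
  have hV : (univ.image (S.face 2)).card * 4 = Fintype.card V := by
    rw [← hS.sum_card_face 2, sum_const_nat]
    intro f hf
    obtain ⟨v, -, rfl⟩ := mem_image.1 hf
    exact h4 v
  have hF := hCubic.two_mul_card_faces
  obtain ⟨i, j, hij, hi, hj, hle, hsum⟩ : ∃ i j : Fin 3, i ≠ j ∧ i ≠ 2 ∧ j ≠ 2 ∧
      (univ.image (S.face i)).card ≤ (univ.image (S.face j)).card ∧
      (univ.image (S.face i)).card + (univ.image (S.face j)).card =
        (univ.image (S.face 2)).card + 2 := by
    have h1 := hS.card_faces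
    rw [Fin.sum_univ_three] at h1
    rcases le_total (univ.image (S.face 0)).card (univ.image (S.face 1)).card with h | h
    · exact ⟨0, 1, by decide, by decide, by decide, h, by omega⟩
    · exact ⟨1, 0, by decide, by decide, by decide, h, by omega⟩
  set n := (univ.image (S.face 2)).card with hn
  set a := (univ.image (S.face i)).card with ha
  have hfib : ∀ (l : Fin 3) f, (univ.filter fun v => S.face l v = f).card ≤ 2 * (D / 2) + 1 := by
    intro l f
    rcases (univ.filter fun v => S.face l v = f).eq_empty_or_nonempty with h | ⟨v, hv⟩
    · rw [h]; simp
    · obtain rfl := (mem_filter.1 hv).2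
      rw [hS.card_fiber]
      have := hD l v
      omega
  obtain ⟨v⟩ := h3.connected_s12.nonempty
  have hn2 : 2 ≤ n := by
    have := hS.two_mul_card_face_le hCubic h3 2 v
    rw [h4] at this
    omega
  have hDn : D ≤ 2 * n := by
    refine Finset.sup_le fun f hf => ?_
    obtain ⟨u, hu⟩ := exists_onFace hf
    have := hS.two_mul_card_face_le hCubic h3 (col f) u
    rw [← hS.eq_face f hf u hu] at this
    omega
  have hD4 : 4 ≤ D := h4 v ▸ hD 2 v
  have hsq := hS.isSquare hCubic h3 hij hi hj h4
  obtain ⟨H, hHH, hHc⟩ := hsq.exists_hamiltonianCycles h3.connected_s12 (hfib i)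
  rw [← hn, ← ha] at hHc
  have hFn : P.faces.card = 2 * n + 2 := by omega
  rw [hFn]
  push_cast
  rcases le_or_gt 3 (D / 2) with hd | hd
  · refine Real.three_rpow_le_of_two_pow_le hd (by omega) (by omega) ?_
    have h1 : 2 ^ n ≤ 2 ^ (a - 1) * N ^ (D / 2 - 1) :=
      hHc.trans (Nat.mul_le_mul_left _ (Nat.pow_le_pow_left (hH H fun s hs => (hHH s hs).1) _))
    refine le_of_mul_le_mul_left (a := 2 ^ n) ?_ (by positivity)
    calc 2 ^ n * 2 ^ n ≤ (2 ^ (a - 1) * N ^ (D / 2 - 1)) * (2 ^ (a - 1) * N ^ (D / 2 - 1)) :=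
          Nat.mul_le_mul h1 h1
      _ = 2 ^ (2 * (a - 1)) * N ^ (2 * (D / 2 - 1)) := by ring
      _ ≤ 2 ^ n * N ^ (2 * (D / 2 - 1)) :=
          Nat.mul_le_mul_right _ (Nat.pow_le_pow_right (by norm_num) (by omega))
  · have hd2 : D / 2 = 2 := by omega
    have hle4 : ∀ l, ∀ f ∈ univ.image (S.face l), f.card ≤ 4 := by
      intro l f hf
      obtain ⟨u, -, rfl⟩ := mem_image.1 hf
      obtain ⟨c, hc⟩ := hS.even_card_face l u
      have := hD l u
      omega
    have hge : ∀ l, n ≤ (univ.image (S.face l)).card := fun l => by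
      have h1 := sum_le_card_nsmul _ _ _ (hle4 l)
      rw [hS.sum_card_face, smul_eq_mul] at h1
      omega
    have hi1 := hge i
    have hj1 := hge j
    have hn2' : n = 2 := by omega
    have ha2 : a = 2 := by omega
    have hi4 : ∀ u, (S.face i u).card = 4 := fun u => by
      refine (sum_eq_sum_iff_of_le (hle4 i)).1 ?_ _ (mem_image_of_mem _ (mem_univ u))
      rw [hS.sum_card_face, sum_const, smul_eq_mul, ← hV, ← ha, ha2, hn2']
    have hsq' := hS.isSquare hCubic h3 hj.symm hi.symm hij.symm hi4
    obtain ⟨H', hHH', hHc'⟩ := hsq'.exists_hamiltonianCycles h3.connected_s12 (hfib 2)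
    rw [← hn, ← ha, ha2, hn2', hd2] at hHc'
    rw [ha2, hn2', hd2] at hHc
    have hdisj : Disjoint H H' := by
      rw [Finset.disjoint_left]
      intro s hs hs'
      obtain ⟨u, hu⟩ := (hHH s hs).2.2 (by omega)
      exact hu ((hHH' s hs').2.1 u)
    have h5 := hH (H ∪ H') fun s hs => (mem_union.1 hs).elim (fun h => (hHH s h).1)
      fun h => (hHH' s h).1
    rw [card_union_of_disjoint hdisj] at h5
    norm_num at hHc hHc'
    have h6 : (3 : ℝ) ≤ N := by exact_mod_cast (by omega : 3 ≤ N)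
    refine le_trans ?_ h6
    conv_rhs => rw [← Real.rpow_one 3]
    refine Real.rpow_le_rpow_of_exponent_le (by norm_num) ?_
    have h7 : (4 : ℝ) ≤ D := by exact_mod_cast hD4
    rw [hn2', div_le_one (by positivity)]
    norm_num
    nlinarith
end
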